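/- arXiv:1405.4037 — 2 statements merged into one kernel-verified Lean document; each statement's English description precedes it below -/
import Mathlib

section
/- Let p be an odd prime, k a field of characteristic 0, G a finite p-group, K/k a field extension, and ρ : G → GL_n(K) a K-irreducible representation whose character takes all its values in k. Then ρ descends to an intermediate field k ⊆ K₀ ⊆ K that is algebraic over k (i.e., of transcendence degree 0 over k); in other words, ed(ρ) = 0. -/
open Matrix

/-- The character of a matrix representation. -/
noncomputable def repChar {G K : Type*} [Group G] [Field K] {n : ℕ}
    (ρ : G →* GL (Fin n) K) (g : G) : K :=
  Matrix.trace (ρ g : Matrix (Fin n) (Fin n) K)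

/-- A matrix representation is irreducible (over the base field) if it is nonzero and the
only invariant subspaces are `⊥` and `⊤`. -/
def IsIrreducibleRep {K : Type*} [Field K] {G : Type*} [Group G] {n : ℕ}
    (ρ : G →* GL (Fin n) K) : Prop :=
  0 < n ∧ ∀ W : Submodule K (Fin n → K),
    (∀ g : G, ∀ v ∈ W, (ρ g : Matrix (Fin n) (Fin n) K).mulVec v ∈ W) → W = ⊥ ∨ W = ⊤

/-- A representation `ρ : G → GL_n(K)` descends to an intermediate field `K₀` of `K/k` if
it is `K`-equivalent (conjugate) to the base change of some representation over `K₀`. -/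
def Descends {k K : Type*} [Field k] [Field K] [Algebra k K] {G : Type*} [Group G] {n : ℕ}
    (ρ : G →* GL (Fin n) K) (K₀ : IntermediateField k K) : Prop :=
  ∃ ρ' : G →* GL (Fin n) K₀, ∃ M : GL (Fin n) K,
    ∀ g, ρ g = M * Units.map ((algebraMap K₀ K).mapMatrix).toMonoidHom (ρ' g) * M⁻¹

/-!
For odd `p`, a noncyclic `p`-group has a noncyclic abelian normal subgroup: if `A` is a maximal
cyclic normal subgroup and `N` is normal with `A` of index `p` in `N`, then commutators in `N` are
central of order dividing `p`, so `x ↦ x ^ p` is an endomorphism of `N` with values in `A`, and its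
kernel is abelian and not cyclic.

Dividing out the kernel, assume that `ρ` is faithful. If `A` is a noncyclic abelian normal subgroup,
the subspaces of `V` annihilated by the maximal ideals of the group algebra `K[A]` are independent
and permuted by `G`. None of them is all of `V`, since otherwise `A` would embed into the units of a
field and be cyclic. Hence `ρ` is induced from the stabilizer of a proper subspace, and one
concludes by induction on the dimension.

If the group is cyclic with generator acting by `T`, then the minimal polynomial of `T` divides
`X ^ N - 1`, so its coefficients are algebraic over `k`; besides `0` and `1` these are, up to sign,
the only entries of the matrix of `T` in a basis `v, T v, T² v, …`.
-/

section OddPGroups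

open scoped IsMulCommutative commutatorElement

section PowerMap

variable {G : Type*} [Group G]

lemma mul_pow_of_commute_commutatorElement {x y : G} (hx : Commute ⁅y, x⁆ x)
    (hy : Commute ⁅y, x⁆ y) (m : ℕ) :
    (x * y) ^ m = ⁅y, x⁆ ^ m.choose 2 * x ^ m * y ^ m := by
  have pow_mul_comm (m : ℕ) : y ^ m * x = ⁅y, x⁆ ^ m * x * y ^ m := by
    induction m with
    | zero => simp
    | succ m ih =>
      calc y ^ (m + 1) * x = y * ⁅y, x⁆ ^ m * x * y ^ m := by
            simp only [pow_succ', mul_assoc, ih]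
        _ = ⁅y, x⁆ ^ m * (y * x) * y ^ m := by
            simp only [(hy.symm.pow_right m).eq, mul_assoc]
        _ = ⁅y, x⁆ ^ m * (⁅y, x⁆ * x * y) * y ^ m := by simp [commutatorElement_def]
        _ = ⁅y, x⁆ ^ (m + 1) * x * y ^ (m + 1) := by
            simp only [pow_succ ⁅y, x⁆, pow_succ' y, mul_assoc]
  induction m with
  | zero => simp
  | succ m ih =>
    calc (x * y) ^ (m + 1) = ⁅y, x⁆ ^ m.choose 2 * x ^ m * (y ^ m * x) * y := by
          simp only [pow_succ, ih, mul_assoc]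
      _ = ⁅y, x⁆ ^ m.choose 2 * (x ^ m * ⁅y, x⁆ ^ m) * x * y ^ m * y := by
          simp only [pow_mul_comm, mul_assoc]
      _ = ⁅y, x⁆ ^ m.choose 2 * ⁅y, x⁆ ^ m * (x ^ m * x) * (y ^ m * y) := by
          simp only [← (hx.pow_pow m m).eq, mul_assoc]
      _ = ⁅y, x⁆ ^ (m + 1).choose 2 * x ^ (m + 1) * y ^ (m + 1) := by
          rw [← pow_add, ← pow_succ, ← pow_succ, Nat.choose_succ_succ' m 1, Nat.choose_one_right,
            add_comm]

lemma exists_monoidHom_eq_pow {m : ℕ} (hm : Odd m)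
    (hcentral : ∀ g h : G, ⁅g, h⁆ ∈ Subgroup.center G) (hpow : ∀ g h : G, ⁅g, h⁆ ^ m = 1) :
    ∃ φ : G →* G, ∀ g, φ g = g ^ m := by
  refine ⟨MonoidHom.mk' (· ^ m) fun x y => ?_, fun _ => rfl⟩
  have hcomm (z : G) : Commute ⁅y, x⁆ z := (Subgroup.mem_center_iff.mp (hcentral y x) z).symm
  have hdvd : m ∣ m.choose 2 := by
    obtain ⟨i, rfl⟩ := hm
    exact ⟨i, by rw [Nat.choose_two_right, Nat.add_sub_cancel, mul_left_comm,
      Nat.mul_div_cancel_left _ two_pos]⟩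
  rw [mul_pow_of_commute_commutatorElement (hcomm x) (hcomm y),
    orderOf_dvd_iff_pow_eq_one.mp ((orderOf_dvd_of_pow_eq_one (hpow y x)).trans hdvd), one_mul]

lemma characteristic_ker_of_forall_eq_pow {φ : G →* G} {m : ℕ} (hφ : ∀ g, φ g = g ^ m) :
    φ.ker.Characteristic :=
  Subgroup.characteristic_iff_le_comap.mpr fun σ g hg => by
    rw [MonoidHom.mem_ker, hφ] at hg
    rw [Subgroup.mem_comap, MonoidHom.mem_ker, hφ, MulEquiv.coe_toMonoidHom, ← map_pow, hg,
      map_one]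

lemma isCyclic_of_isCyclic_ker_range [Finite G] {p : ℕ} [Fact p.Prime] (hG : IsPGroup p G)
    {φ : G →* G} (hφ : ∀ g, φ g = g ^ p) [IsCyclic φ.ker] [IsCyclic φ.range] : IsCyclic G := by
  obtain ⟨y, hy⟩ := IsCyclic.exists_ofOrder_eq_natCard (α := φ.range)
  obtain ⟨g, hg⟩ := y.2
  rw [← Subgroup.orderOf_coe, ← hg, hφ] at hy
  have card_ker_dvd : Nat.card φ.ker ∣ p := by
    rw [← IsCyclic.exponent_eq_card]
    exact Monoid.exponent_dvd_of_forall_pow_eq_one fun x => Subtype.ext (by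
      rw [Subgroup.coe_pow, ← hφ, x.2, Subgroup.coe_one])
  have card_eq : Nat.card φ.ker * orderOf (g ^ p) = Nat.card G := by
    rw [hy, ← Subgroup.index_ker, Subgroup.card_mul_index]
  by_cases hp : p ∣ orderOf g
  · refine isCyclic_of_orderOf_eq_card g (Nat.dvd_antisymm (orderOf_dvd_natCard g) ?_)
    rw [← card_eq, orderOf_pow_of_dvd (Fact.out : p.Prime).ne_zero hp]
    simpa only [Nat.mul_div_cancel' hp] using mul_dvd_mul_right card_ker_dvd (orderOf g / p)
  · have orderOf_eq_one : orderOf (g ^ p) = 1 := by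
      obtain ⟨_ | n, hn⟩ := hG.exists_orderOf_eq_pow g
      · rw [orderOf_eq_one_iff.mp hn, one_pow, orderOf_one]
      · exact absurd (hn ▸ dvd_pow_self p n.succ_ne_zero) hp
    rw [orderOf_eq_one, mul_one] at card_eq
    exact isCyclic_of_card_dvd_prime (card_eq ▸ card_ker_dvd)

end PowerMap

lemma dvd_mul_sub_one_of_dvd_pow_sub_one {p : ℕ} (hp : p.Prime) (hodd : p ≠ 2) {n : ℕ} {r : ℤ}
    (h : (p : ℤ) ^ n ∣ r ^ p - 1) : (p : ℤ) ^ n ∣ p * (r - 1) := by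
  rcases eq_or_ne n 0 with rfl | hn
  · simp
  have hp' : Prime (p : ℤ) := Nat.prime_iff_prime_int.mp hp
  have : Fact p.Prime := ⟨hp⟩
  have dvd_sub_one : (p : ℤ) ∣ r - 1 := by
    have hdvd := (dvd_pow_self (p : ℤ) hn).trans h
    rw [← ZMod.intCast_zmod_eq_zero_iff_dvd] at hdvd ⊢
    simpa only [Int.cast_sub, Int.cast_pow, Int.cast_one, ZMod.pow_card] using hdvd
  have not_dvd : ¬ (p : ℤ) ∣ r := fun hr =>
    hp'.not_dvd_one (by simpa only [sub_sub_cancel] using dvd_sub hr dvd_sub_one)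
  rwa [pow_dvd_iff_le_emultiplicity, emultiplicity_mul hp', add_comm, Int.natCast_emultiplicity,
    ← Int.emultiplicity_pow_sub_pow hp (hp.odd_of_ne_two hodd) dvd_sub_one not_dvd, one_pow,
    ← pow_dvd_iff_le_emultiplicity]

section CyclicNormalSubgroup

variable {G : Type*} [Group G] {A : Subgroup G} [IsCyclic A]

lemma natCard_dvd_pow_sub_one {x : G} {r : ℤ} (hr : ∀ a ∈ A, x * a * x⁻¹ = a ^ r) {m : ℕ}
    (hxm : x ^ m ∈ A) : (Nat.card A : ℤ) ∣ r ^ m - 1 := by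
  have conj_pow_eq (m : ℕ) (a : G) (ha : a ∈ A) : x ^ m * a * (x ^ m)⁻¹ = a ^ r ^ m := by
    induction m with
    | zero => simp
    | succ m ih =>
      calc x ^ (m + 1) * a * (x ^ (m + 1))⁻¹ = x * (x ^ m * a * (x ^ m)⁻¹) * x⁻¹ := by
            rw [pow_succ']; group
        _ = a ^ r ^ (m + 1) := by
            rw [ih, hr _ (zpow_mem ha _), ← _root_.zpow_mul, pow_succ]
  obtain ⟨a, ha⟩ := IsCyclic.exists_ofOrder_eq_natCard (α := A)
  rw [← ha, orderOf_dvd_iff_zpow_eq_one, _root_.zpow_sub_one, mul_inv_eq_one]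
  refine Subtype.ext ?_
  rw [Subgroup.coe_zpow, ← conj_pow_eq m a a.2, setLike_mul_comm hxm a.2,
    mul_inv_cancel_right]

variable [A.Normal]

variable (A) in
lemma exists_forall_conj_eq_zpow (x : G) : ∃ r : ℤ, ∀ a ∈ A, x * a * x⁻¹ = a ^ r := by
  obtain ⟨r, hr⟩ := MonoidHom.map_cyclic (MulAut.conjNormal x : A ≃* A).toMonoidHom
  exact ⟨r, fun a ha => by simpa using congrArg Subtype.val (hr ⟨a, ha⟩)⟩

lemma commute_of_pow_prime_eq_one {p : ℕ} [Fact p.Prime] {x z : G} (hx : x ^ p ∈ A)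
    (hz : z ∈ A) (hzp : z ^ p = 1) : Commute x z := by
  obtain ⟨r, hr⟩ := exists_forall_conj_eq_zpow A x
  have zpow_eq : z ^ r ^ p = z := by
    have hdvd : (orderOf z : ℤ) ∣ r ^ p - 1 :=
      (Int.natCast_dvd_natCast.mpr (A.orderOf_dvd_natCard hz)).trans (natCard_dvd_pow_sub_one hr hx)
    rwa [orderOf_dvd_iff_zpow_eq_one, _root_.zpow_sub_one, mul_inv_eq_one] at hdvd
  have fermat : (orderOf z : ℤ) ∣ r ^ p - r := by
    refine (Int.natCast_dvd_natCast.mpr (orderOf_dvd_of_pow_eq_one hzp)).trans ?_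
    rw [← ZMod.intCast_zmod_eq_zero_iff_dvd]
    simp only [Int.cast_sub, Int.cast_pow, ZMod.pow_card, sub_self]
  rw [orderOf_dvd_iff_zpow_eq_one, _root_.zpow_sub, zpow_eq, ← hr z hz, mul_inv_eq_one] at fermat
  exact mul_inv_eq_iff_eq_mul.mp fermat.symm

lemma commutatorElement_pow_eq_one [Finite G] {p : ℕ} [Fact p.Prime] (hG : IsPGroup p G)
    (hodd : p ≠ 2) {x a : G} (hx : x ^ p ∈ A) (ha : a ∈ A) : ⁅x, a⁆ ^ p = 1 := by
  obtain ⟨r, hr⟩ := exists_forall_conj_eq_zpow A x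
  obtain ⟨n, hn⟩ := IsPGroup.iff_card.mp (hG.to_subgroup A)
  have hdvd := natCard_dvd_pow_sub_one hr hx
  rw [hn, Nat.cast_pow] at hdvd
  have orderOf_dvd : (orderOf a : ℤ) ∣ (r - 1) * p := by
    have := dvd_mul_sub_one_of_dvd_pow_sub_one Fact.out hodd hdvd
    rw [← Nat.cast_pow, ← hn, mul_comm] at this
    exact (Int.natCast_dvd_natCast.mpr (A.orderOf_dvd_natCard ha)).trans this
  rw [commutatorElement_def, hr a ha, ← _root_.zpow_sub_one, ← zpow_natCast, ← _root_.zpow_mul]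
  exact orderOf_dvd_iff_zpow_eq_one.mp orderOf_dvd

variable [Finite G] {p : ℕ} [Fact p.Prime]

lemma commutatorElement_mem_and_pow_eq_one (hG : IsPGroup p G) (hodd : p ≠ 2)
    (hA : A.index = p) (g h : G) : ⁅g, h⁆ ∈ A ∧ ⁅g, h⁆ ^ p = 1 := by
  have pow_mem (x : G) : x ^ p ∈ A := hA ▸ A.pow_index_mem x
  let Z : Subgroup G := (powMonoidHom p : A →* A).ker.map A.subtype
  have mem_Z {z : G} : z ∈ Z ↔ z ∈ A ∧ z ^ p = 1 := by
    simp [Z, Subtype.ext_iff, and_comm]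
  have : (powMonoidHom p : A →* A).ker.Characteristic :=
    characteristic_ker_of_forall_eq_pow fun _ => rfl
  have : Z.Normal := inferInstance
  have : IsCyclic (G ⧸ A) := isCyclic_of_prime_card (p := p) hA
  let f : G ⧸ Z →* G ⧸ A :=
    QuotientGroup.map Z A (MonoidHom.id G) fun z hz => (mem_Z.mp hz).1
  have ker_le_center : f.ker ≤ Subgroup.center (G ⧸ Z) := by
    intro q hq
    induction q using QuotientGroup.induction_on with
    | H a =>
      have ha : a ∈ A := (QuotientGroup.eq_one_iff a).mp hq
      rw [Subgroup.mem_center_iff]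
      intro q
      induction q using QuotientGroup.induction_on with
      | H x =>
        have hmem : ⁅x, a⁆ ∈ Z := mem_Z.mpr
          ⟨A.mul_mem (‹A.Normal›.conj_mem a ha x) (A.inv_mem ha),
            commutatorElement_pow_eq_one hG hodd (pow_mem x) ha⟩
        exact commutatorElement_eq_one_iff_mul_comm.mp ((QuotientGroup.eq_one_iff _).mpr hmem)
  have := f.isMulCommutative_of_isCyclic_of_ker_le_center ker_le_center
  have commutator_le : commutator G ≤ Z :=
    Subgroup.Normal.quotient_commutative_iff_commutator_le.mp inferInstance
  exact mem_Z.mp (commutator_le (Subgroup.commutator_mem_commutator trivial trivial))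

lemma exists_characteristic_isMulCommutative_not_isCyclic (hG : IsPGroup p G) (hodd : p ≠ 2)
    (hA : A.index = p) (hcyc : ¬ IsCyclic G) :
    ∃ Ω : Subgroup G, Ω.Characteristic ∧ IsMulCommutative Ω ∧ ¬ IsCyclic Ω := by
  have pow_mem (x : G) : x ^ p ∈ A := hA ▸ A.pow_index_mem x
  have torsion_le_center {z : G} (hz : z ∈ A) (hzp : z ^ p = 1) : z ∈ Subgroup.center G :=
    Subgroup.mem_center_iff.mpr fun x => commute_of_pow_prime_eq_one (pow_mem x) hz hzp
  obtain ⟨φ, hφ⟩ := exists_monoidHom_eq_pow ((Fact.out : p.Prime).odd_of_ne_two hodd)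
    (fun g h : G => torsion_le_center (commutatorElement_mem_and_pow_eq_one hG hodd hA g h).1
      (commutatorElement_mem_and_pow_eq_one hG hodd hA g h).2)
    (fun g h => (commutatorElement_mem_and_pow_eq_one hG hodd hA g h).2)
  refine ⟨φ.ker, characteristic_ker_of_forall_eq_pow hφ, ?_, fun h => hcyc ?_⟩
  · have : IsCyclic (G ⧸ A) := isCyclic_of_prime_card (p := p) hA
    refine ((QuotientGroup.mk' A).comp φ.ker.subtype).isMulCommutative_of_isCyclic_of_ker_le_center
      fun z hz => Subgroup.mem_center_iff.mpr fun x => Subtype.ext ?_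
    have z_mem : (z : G) ∈ A := (QuotientGroup.eq_one_iff _).mp hz
    exact Subgroup.mem_center_iff.mp (torsion_le_center z_mem ((hφ z).symm.trans z.2)) x
  · have range_le : φ.range ≤ A := by
      rintro _ ⟨g, rfl⟩
      exact hφ g ▸ pow_mem g
    have := Subgroup.isCyclic_of_le range_le
    exact isCyclic_of_isCyclic_ker_range hG hφ

end CyclicNormalSubgroup

section NormalSubgroups

variable {G : Type*} [Group G] [Finite G] {p : ℕ} [Fact p.Prime]

lemma exists_normal_ge_relIndex_eq (hG : IsPGroup p G) {A : Subgroup G} [A.Normal] (hA : A ≠ ⊤) :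
    ∃ N : Subgroup G, N.Normal ∧ A ≤ N ∧ A.relIndex N = p := by
  have : Nontrivial (G ⧸ A) := QuotientGroup.nontrivial_iff.mpr hA
  have hQ : IsPGroup p (G ⧸ A) := hG.to_quotient A
  have hdvd : p ∣ Nat.card (Subgroup.center (G ⧸ A)) := by
    have := hQ.center_nontrivial
    obtain ⟨m, hm, hcard⟩ := (hQ.to_subgroup (Subgroup.center (G ⧸ A))).nontrivial_iff_card.mp this
    exact hcard ▸ dvd_pow_self p hm.ne'
  obtain ⟨z, hz⟩ := exists_prime_orderOf_dvd_card' p hdvd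
  let C : Subgroup (G ⧸ A) := Subgroup.zpowers (z : G ⧸ A)
  have C_le_center : C ≤ Subgroup.center (G ⧸ A) := Subgroup.zpowers_le.mpr z.2
  have : C.Normal := ⟨fun c hc q => by
    rwa [Subgroup.mem_center_iff.mp (C_le_center hc) q, mul_inv_cancel_right]⟩
  have mk_surjective : Function.Surjective (QuotientGroup.mk' A) := QuotientGroup.mk'_surjective A
  refine ⟨C.comap (QuotientGroup.mk' A), inferInstance, ?_, ?_⟩
  · simpa only [QuotientGroup.ker_mk'] using (QuotientGroup.mk' A).ker_le_comap C
  · have card_eq := Subgroup.relIndex_ker (C.comap (QuotientGroup.mk' A)) (QuotientGroup.mk' A)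
    rwa [QuotientGroup.ker_mk', Subgroup.map_comap_eq_self_of_surjective mk_surjective,
      Nat.card_zpowers, Subgroup.orderOf_coe, hz] at card_eq

lemma exists_normal_isMulCommutative_not_isCyclic (hG : IsPGroup p G) (hodd : p ≠ 2)
    (hcyc : ¬ IsCyclic G) : ∃ A : Subgroup G, A.Normal ∧ IsMulCommutative A ∧ ¬ IsCyclic A := by
  obtain ⟨A, ⟨hAn, hAc⟩, hmax⟩ :=
    (Set.toFinite {A : Subgroup G | A.Normal ∧ IsCyclic A}).exists_maximal
      ⟨⊥, inferInstance, inferInstance⟩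
  have A_ne_top : A ≠ ⊤ := by
    rintro rfl
    exact hcyc (Subgroup.topEquiv.isCyclic.mp hAc)
  obtain ⟨N, hNn, hAN, hindex⟩ := exists_normal_ge_relIndex_eq hG A_ne_top
  have hNc : ¬ IsCyclic N := fun hNc => by
    rw [hAN.antisymm (hmax ⟨hNn, hNc⟩ hAN), Subgroup.relIndex_self] at hindex
    exact (Fact.out : p.Prime).ne_one hindex.symm
  have : IsCyclic (A.subgroupOf N) := (Subgroup.subgroupOfEquivOfLe hAN).isCyclic.mpr hAc
  obtain ⟨Ω, hΩ, hΩcomm, hΩcyc⟩ := exists_characteristic_isMulCommutative_not_isCyclic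
    (hG.to_subgroup N) hodd hindex hNc
  exact ⟨Ω.map N.subtype, inferInstance, inferInstance, fun h => hΩcyc
    ((Ω.equivMapOfInjective N.subtype N.subtype_injective).isCyclic.mpr h)⟩

end NormalSubgroups

end OddPGroups

section Representations

open Module Polynomial

section Irreducible

variable {K G V : Type*} [Field K] [Group G] [AddCommGroup V] [Module K V]

lemma isIrreducible_iff_forall_invariant {ρ : Representation K G V} :
    ρ.IsIrreducible ↔ Nontrivial V ∧
      ∀ W : Submodule K V, (∀ g, W ≤ W.comap (ρ g)) → W = ⊥ ∨ W = ⊤ := by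
  refine ⟨fun _ => ⟨?_, fun W hW => ?_⟩, fun ⟨_, h⟩ => ?_⟩
  · refine (Submodule.nontrivial_iff K).mp ⟨⊥, ⊤, fun h => ?_⟩
    exact bot_ne_top (α := Subrepresentation ρ) (Subrepresentation.toSubmodule_injective h)
  · exact (eq_bot_or_eq_top (⟨W, hW⟩ : Subrepresentation ρ)).imp
      (congrArg Subrepresentation.toSubmodule) (congrArg Subrepresentation.toSubmodule)
  · exact
      { exists_pair_ne := ⟨⊥, ⊤, fun h =>
          bot_ne_top (α := Submodule K V) (congrArg Subrepresentation.toSubmodule h)⟩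
        eq_bot_or_eq_top := fun U => (h U.toSubmodule U.apply_mem_toSubmodule).imp
          (fun hU => Subrepresentation.toSubmodule_injective hU)
          (fun hU => Subrepresentation.toSubmodule_injective hU) }

lemma nontrivial_of_isIrreducible (ρ : Representation K G V) [ρ.IsIrreducible] : Nontrivial V :=
  (isIrreducible_iff_forall_invariant.mp ‹ρ.IsIrreducible›).1

variable {ρ : Representation K G V} [ρ.IsIrreducible]

lemma eq_top_of_invariant_of_ne_bot {W : Submodule K V} (hW : ∀ g, W ≤ W.comap (ρ g))
    (hbot : W ≠ ⊥) : W = ⊤ :=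
  ((isIrreducible_iff_forall_invariant.mp ‹ρ.IsIrreducible›).2 W hW).resolve_left hbot

lemma eq_zero_of_commute_of_apply_eq_zero {S : End K V} (hS : ∀ g, Commute (ρ g) S) {v : V}
    (hv : v ≠ 0) (hSv : S v = 0) : S = 0 := by
  refine LinearMap.ker_eq_top.mp (eq_top_of_invariant_of_ne_bot (ρ := ρ) (fun g u hu => ?_) ?_)
  · rw [Submodule.mem_comap, LinearMap.mem_ker] at *
    rw [← End.mul_apply, ← (hS g).eq, End.mul_apply, hu, map_zero]
  · exact (Submodule.ne_bot_iff _).mpr ⟨v, hSv, hv⟩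

end Irreducible

section IsDefinedOver

variable {K G V : Type*} [Field K] [Group G] [AddCommGroup V] [Module K V]
  (F : Type*) [Field F] [Module F V]

/-- A representation over `K` is defined over a subfield `F` if some `K`-basis of the underlying
space spans a `G`-stable `F`-subspace; equivalently, all the matrices of the representation in
that basis have entries in `F`. -/
def IsDefinedOver (ρ : Representation K G V) : Prop :=
  ∃ (n : ℕ) (b : Basis (Fin n) K V), ∀ g i, ρ g (b i) ∈ Submodule.span F (Set.range b)

variable {F}

lemma IsDefinedOver.of_basis {ρ : Representation K G V} {ι : Type*} [Finite ι] (b : Basis ι K V)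
    (hb : ∀ g i, ρ g (b i) ∈ Submodule.span F (Set.range b)) : IsDefinedOver F ρ := by
  obtain ⟨n, ⟨e⟩⟩ := Finite.exists_equiv_fin ι
  exact ⟨n, b.reindex e, fun g i => by
    simpa only [Basis.range_reindex, Basis.reindex_apply] using hb g (e.symm i)⟩

end IsDefinedOver

section CyclicGroups

variable {F K : Type*} [Field F] [Field K] [Algebra F K]

lemma minpoly_mem_lifts [IsIntegrallyClosedIn F K] {A : Type*} [Ring A] [Algebra F A]
    [Algebra K A] [IsScalarTower F K A] {x : A} (hx : IsIntegral F x) :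
    minpoly K x ∈ lifts (algebraMap F K) := by
  refine (lifts_iff_coeff_lifts _).mpr fun i => IsIntegrallyClosedIn.algebraMap_eq_of_integral ?_
  obtain ⟨y, hy⟩ := (lifts_iff_coeff_lifts _).mp
    (integralClosure.mem_lifts_of_monic_of_dvd_map K (minpoly.monic hx)
      (minpoly.monic hx.tower_top) (minpoly.dvd_map_of_isScalarTower F K x)) i
  exact hy ▸ y.2

variable {V : Type*} [AddCommGroup V] [Module K V] [Module F V] [IsScalarTower F K V]

lemma pow_apply_mem_span_range [IsIntegrallyClosedIn F K] {T : End K V} (hT : IsIntegral F T)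
    (v : V) (m : ℕ) : (T ^ m) v ∈
      Submodule.span F (Set.range fun i : Fin (minpoly K T).natDegree => (T ^ (i : ℕ)) v) := by
  classical
  obtain ⟨q, hq, hdeg, hmonic⟩ := lifts_and_natDegree_eq_and_monic (minpoly_mem_lifts (K := K) hT)
    (minpoly.monic hT.tower_top)
  have aeval_eq_zero : aeval T q = 0 := by
    rw [← aeval_map_algebraMap K, hq, minpoly.aeval]
  have pow_mem : T ^ m ∈ Submodule.span F ((T ^ ·) '' (Finset.range q.natDegree : Set ℕ)) := by
    rw [← Finset.coe_image, Submodule.span_range_natDegree_eq_adjoin hmonic aeval_eq_zero]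
    exact pow_mem (Algebra.self_mem_adjoin_singleton F T) m
  let eval : End K V →ₗ[F] V := (LinearMap.applyₗ v).restrictScalars F
  refine Submodule.span_mono ?_ (Submodule.map_span eval _ ▸ Submodule.mem_map_of_mem pow_mem)
  rintro _ ⟨_, ⟨i, hi, rfl⟩, rfl⟩
  exact ⟨⟨i, hdeg ▸ Finset.mem_range.mp hi⟩, rfl⟩

variable {G : Type*} [Group G]

lemma linearIndependent_pow_apply {ρ : Representation K G V} [ρ.IsIrreducible] {T : End K V}
    (hT : ∀ g, Commute (ρ g) T) {v : V} (hv : v ≠ 0) :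
    LinearIndependent K fun i : Fin (minpoly K T).natDegree => (T ^ (i : ℕ)) v := by
  refine (linearIndependent_pow T).map (f := (LinearMap.applyₗ v : End K V →ₗ[K] V)) ?_
  refine Submodule.disjoint_def.mpr fun S hS hSv => ?_
  refine eq_zero_of_commute_of_apply_eq_zero (ρ := ρ) (fun g => ?_) hv hSv
  refine Submodule.span_induction (fun _ ⟨i, hi⟩ => hi ▸ (hT g).pow_right i)
    (Commute.zero_right _) (fun _ _ _ _ => Commute.add_right) (fun c _ _ h => h.smul_right c) hS

lemma isDefinedOver_of_isCyclic [IsIntegrallyClosedIn F K] [Finite G] [IsCyclic G]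
    (ρ : Representation K G V) [ρ.IsIrreducible] : IsDefinedOver F ρ := by
  obtain ⟨z, hz⟩ := IsCyclic.exists_monoid_generator (α := G)
  have eq_pow (g : G) : ∃ m : ℕ, ρ g = ρ z ^ m := by
    obtain ⟨m, rfl⟩ := hz g
    exact ⟨m, map_pow ρ z m⟩
  have hT (g : G) : Commute (ρ g) (ρ z) := by
    obtain ⟨m, hm⟩ := eq_pow g
    exact hm ▸ (Commute.refl _).pow_left m
  have integral : IsIntegral F (ρ z) :=
    .of_pow Nat.card_pos (by rw [← map_pow, pow_card_eq_one', map_one]; exact isIntegral_one)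
  have := nontrivial_of_isIrreducible ρ
  obtain ⟨v, hv⟩ := exists_ne (0 : V)
  let w (i : Fin (minpoly K (ρ z)).natDegree) : V := (ρ z ^ (i : ℕ)) v
  have apply_mem (g : G) (i) : ρ g (w i) ∈ Submodule.span F (Set.range w) := by
    obtain ⟨m, hm⟩ := eq_pow g
    rw [hm, ← End.mul_apply, ← pow_add]
    exact pow_apply_mem_span_range integral v _
  have span_eq_top : Submodule.span K (Set.range w) = ⊤ := by
    refine eq_top_of_invariant_of_ne_bot (ρ := ρ) (fun g => Submodule.span_le.mpr ?_) ?_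
    · rintro _ ⟨i, rfl⟩
      exact Submodule.span_subset_span F K _ (apply_mem g i)
    · exact (Submodule.ne_bot_iff _).mpr ⟨v, Submodule.span_subset_span F K _
        (by simpa using pow_apply_mem_span_range integral v 0), hv⟩
  refine .of_basis (.mk (linearIndependent_pow_apply hT hv) span_eq_top.ge) fun g i => ?_
  simpa only [Basis.coe_mk] using apply_mem g i

end CyclicGroups

section Clifford

variable {K V : Type*} [Field K] [AddCommGroup V] [Module K V]

section AnnihilatedBy

variable {R : Type*} [CommRing R] (φ : R →+* End K V)

/-- The subspace of `V` annihilated by an ideal of a commutative ring `R` acting on `V` through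
`φ`. For `R` the group algebra of an abelian group and a maximal ideal, this is the isotypic
component of Clifford theory. -/
def annihilatedBy (I : Ideal R) : Submodule K V := ⨅ r ∈ I, LinearMap.ker (φ r)

variable {φ}

lemma mem_annihilatedBy {I : Ideal R} {v : V} : v ∈ annihilatedBy φ I ↔ ∀ r ∈ I, φ r v = 0 := by
  simp only [annihilatedBy, Submodule.mem_iInf, LinearMap.mem_ker]

variable (φ)

lemma exists_annihilatedBy_ne_bot [IsArtinianRing R] [Nontrivial V] :
    ∃ m : MaximalSpectrum R, annihilatedBy φ m.asIdeal ≠ ⊥ := by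
  let : Module R V := Module.compHom V φ
  obtain ⟨P, hP⟩ := associatedPrimes.nonempty R V
  obtain ⟨hprime, v, hv⟩ := Submodule.isAssociatedPrime_iff.mp hP
  have mem_P (r : R) : r ∈ P ↔ φ r v = 0 := by
    rw [hv, Submodule.mem_colon_singleton]
    rfl
  refine ⟨⟨P, inferInstance⟩, (Submodule.ne_bot_iff _).mpr
    ⟨v, mem_annihilatedBy.mpr fun r hr => (mem_P r).mp hr, ?_⟩⟩
  rintro rfl
  exact hprime.ne_top ((Ideal.eq_top_iff_one _).mpr ((mem_P 1).mpr (map_zero _)))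

lemma iSupIndep_annihilatedBy [Finite (MaximalSpectrum R)] :
    iSupIndep fun m : MaximalSpectrum R => annihilatedBy φ m.asIdeal := by
  classical
  cases nonempty_fintype (MaximalSpectrum R)
  intro m
  have coprime : m.asIdeal ⊔ ⨅ n ∈ Finset.univ.erase m, n.asIdeal = ⊤ :=
    Ideal.sup_iInf_eq_top fun n hn => m.isMaximal.coprime_of_ne n.isMaximal fun h =>
      Finset.ne_of_mem_erase hn (MaximalSpectrum.ext h.symm)
  obtain ⟨r, hr, s, hs, hrs⟩ := Submodule.mem_sup.mp (coprime ▸ Submodule.mem_top : (1 : R) ∈ _)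
  simp only [Submodule.mem_iInf] at hs
  have iSup_le_ker : ⨆ n, ⨆ (_ : n ≠ m), annihilatedBy φ n.asIdeal ≤ LinearMap.ker (φ s) :=
    iSup₂_le fun n hn _ hv =>
      mem_annihilatedBy.mp hv s (hs n (Finset.mem_erase.mpr ⟨hn, Finset.mem_univ n⟩))
  refine Submodule.disjoint_def.mpr fun v hv hv' => ?_
  calc v = φ (r + s) v := by rw [hrs, map_one, End.one_apply]
    _ = 0 := by
      rw [map_add, LinearMap.add_apply, mem_annihilatedBy.mp hv r hr, iSup_le_ker hv', add_zero]

variable {φ}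

lemma map_annihilatedBy {σ : R ≃+* R} {S : End K V} (hS : Function.Bijective S)
    (hσ : ∀ r, φ (σ r) * S = S * φ r) (I : Ideal R) :
    (annihilatedBy φ I).map S = annihilatedBy φ (I.comap σ.symm) := by
  ext v
  obtain ⟨u, rfl⟩ := hS.2 v
  have mem_comap (r : R) : σ r ∈ I.comap σ.symm ↔ r ∈ I := by
    rw [Ideal.mem_comap, RingEquiv.symm_apply_apply]
  have apply_eq_zero (r : R) : φ (σ r) (S u) = 0 ↔ φ r u = 0 := by
    rw [← End.mul_apply, hσ, End.mul_apply, map_eq_zero_iff S hS.1]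
  have mem_map : S u ∈ (annihilatedBy φ I).map S ↔ u ∈ annihilatedBy φ I :=
    hS.1.mem_set_image
  rw [mem_map, mem_annihilatedBy, mem_annihilatedBy]
  exact σ.toEquiv.forall_congr fun r => imp_congr (mem_comap r).symm (apply_eq_zero r).symm

end AnnihilatedBy

variable {G : Type*} [Group G] (ρ : Representation K G V)

/-- The set of translates `ρ g W` of a subspace `W` by the elements `g` of the group. -/
def translates (W : Submodule K V) : Set (Submodule K V) := Set.range fun g => W.map (ρ g)

lemma map_apply_map_apply (W : Submodule K V) (g h : G) :
    (W.map (ρ h)).map (ρ g) = W.map (ρ (g * h)) := by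
  rw [map_mul, End.mul_eq_comp, Submodule.map_comp]

lemma map_apply_one (W : Submodule K V) : W.map (ρ 1) = W := by
  rw [map_one, End.one_eq_id, Submodule.map_id]

section NormalSubgroup

variable (A : Subgroup G)

/-- The action on `V` of the group algebra of the subgroup `A`. -/
noncomputable abbrev subgroupAlgebraHom : MonoidAlgebra K A →ₐ[K] End K V :=
  Representation.asAlgebraHom (ρ.comp A.subtype)

lemma subgroupAlgebraHom_domCongr_conjNormal_mul [A.Normal] (g : G) (r : MonoidAlgebra K A) :
    subgroupAlgebraHom ρ A (MonoidAlgebra.domCongr K K (MulAut.conjNormal g) r) * ρ g =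
      ρ g * subgroupAlgebraHom ρ A r := by
  induction r using MonoidAlgebra.induction_on with
  | of a =>
    simp only [MonoidAlgebra.of_apply, MonoidAlgebra.domCongr_single]
    simp [← map_mul]
  | add x y hx hy => simp only [map_add, add_mul, mul_add, hx, hy]
  | smul c x hx => simp only [map_smul, smul_mul_assoc, mul_smul_comm, hx]

open scoped IsMulCommutative in
lemma isCyclic_of_annihilatedBy_eq_top [IsMulCommutative A] [Finite A]
    (hρ : Function.Injective ρ) (m : Ideal (MonoidAlgebra K A)) [m.IsMaximal]
    (hm : annihilatedBy (subgroupAlgebraHom ρ A : MonoidAlgebra K A →+* End K V) m = ⊤) :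
    IsCyclic A := by
  refine isCyclic_of_injective_ringHom (R := MonoidAlgebra K A ⧸ m)
    ((Ideal.Quotient.mk m : MonoidAlgebra K A →* _).comp (MonoidAlgebra.of K A)) fun a b hab => ?_
  have sub_mem : MonoidAlgebra.of K A a - MonoidAlgebra.of K A b ∈ m := Ideal.Quotient.eq.mp hab
  refine Subtype.ext (hρ (LinearMap.ext fun v => ?_))
  have := mem_annihilatedBy.mp (hm ▸ Submodule.mem_top : v ∈ _) _ sub_mem
  simpa [sub_eq_zero] using this

open scoped IsMulCommutative in
lemma exists_sSupIndep_translates [Finite A] [A.Normal] [IsMulCommutative A] [Nontrivial V]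
    (hρ : Function.Injective ρ) (hcyc : ¬ IsCyclic A) :
    ∃ W : Submodule K V, W ≠ ⊥ ∧ W ≠ ⊤ ∧ sSupIndep (translates ρ W) := by
  have : IsArtinianRing (MonoidAlgebra K A) := IsArtinianRing.of_finite K _
  let φ : MonoidAlgebra K A →+* End K V := subgroupAlgebraHom ρ A
  obtain ⟨m, hm⟩ := exists_annihilatedBy_ne_bot φ
  refine ⟨annihilatedBy φ m.asIdeal, hm, fun htop => hcyc ?_, ?_⟩
  · have := m.isMaximal
    exact isCyclic_of_annihilatedBy_eq_top ρ A hρ m.asIdeal htop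
  · refine (iSupIndep_annihilatedBy φ).sSupIndep_range.mono ?_
    rintro _ ⟨g, rfl⟩
    let σ := (MonoidAlgebra.domCongr K K (MulAut.conjNormal g : A ≃* A)).toRingEquiv
    have := m.isMaximal
    exact ⟨⟨m.asIdeal.comap σ.symm, Ideal.comap_isMaximal_of_surjective _ σ.symm.surjective⟩,
      (map_annihilatedBy (ρ.apply_bijective g)
        (subgroupAlgebraHom_domCongr_conjNormal_mul ρ A g) m.asIdeal).symm⟩

end NormalSubgroup

section Stabilizer

/-- The subgroup of elements `g` with `ρ g W = W`. -/
def submoduleStabilizer (W : Submodule K V) : Subgroup G where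
  carrier := {g | W.map (ρ g) = W}
  one_mem' := map_apply_one ρ W
  mul_mem' {g h} hg hh := by
    rw [Set.mem_ofPred_eq] at hg hh ⊢
    rw [← map_apply_map_apply, hh, hg]
  inv_mem' {g} hg := by
    rw [Set.mem_ofPred_eq] at hg ⊢
    nth_rw 1 [← hg]
    rw [map_apply_map_apply, inv_mul_cancel, map_apply_one]

lemma mem_submoduleStabilizer {W : Submodule K V} {g : G} :
    g ∈ submoduleStabilizer ρ W ↔ W.map (ρ g) = W := Iff.rfl

lemma inv_mul_mem_submoduleStabilizer {W : Submodule K V} {g h : G}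
    (hgh : W.map (ρ g) = W.map (ρ h)) : h⁻¹ * g ∈ submoduleStabilizer ρ W := by
  rw [mem_submoduleStabilizer, ← map_apply_map_apply, hgh, map_apply_map_apply, inv_mul_cancel,
    map_apply_one]

/-- The subspace `W` as a representation of its stabilizer. -/
def stabilizerRepresentation (W : Submodule K V) :
    Representation K (submoduleStabilizer ρ W) W :=
  Subrepresentation.toRepresentation (ρ := ρ.comp (submoduleStabilizer ρ W).subtype)
    ⟨W, fun h _ hv => h.2.le (Submodule.mem_map_of_mem hv)⟩

lemma coe_stabilizerRepresentation_apply {W : Submodule K V} (h : submoduleStabilizer ρ W)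
    (w : W) : (stabilizerRepresentation ρ W h w : V) = ρ h w := rfl

variable [ρ.IsIrreducible] {W : Submodule K V}

lemma sSup_translates_eq_top (hW : W ≠ ⊥) : sSup (translates ρ W) = ⊤ := by
  refine eq_top_of_invariant_of_ne_bot (ρ := ρ) (fun g => sSup_le ?_) (ne_bot_of_le_ne_bot hW ?_)
  · rintro _ ⟨h, rfl⟩
    rw [← Submodule.map_le_iff_le_comap, map_apply_map_apply]
    exact le_sSup ⟨g * h, rfl⟩
  · exact le_sSup ⟨1, map_apply_one ρ W⟩

lemma isIrreducible_stabilizerRepresentation (hW : W ≠ ⊥) (hind : sSupIndep (translates ρ W)) :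
    (stabilizerRepresentation ρ W).IsIrreducible := by
  refine isIrreducible_iff_forall_invariant.mpr
    ⟨Submodule.nontrivial_iff_ne_bot.mpr hW, fun U hU => or_iff_not_imp_left.mpr fun hbot => ?_⟩
  let U' : Submodule K V := U.map W.subtype
  have U'_le : U' ≤ W := Submodule.map_subtype_le W U
  have U'_ne_bot : U' ≠ ⊥ := fun h => hbot
    (Submodule.map_injective_of_injective W.injective_subtype (h.trans (Submodule.map_bot _).symm))
  have translate_le (g : G) : U'.map (ρ g) ≤ U' ⊔ sSup (translates ρ W \ {W}) := by
    by_cases hg : g ∈ submoduleStabilizer ρ W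
    · refine le_sup_of_le_left ?_
      rintro _ ⟨_, ⟨u, hu, rfl⟩, rfl⟩
      exact ⟨stabilizerRepresentation ρ W ⟨g, hg⟩ u, hU _ hu, rfl⟩
    · exact le_sup_of_le_right ((Submodule.map_mono U'_le).trans (le_sSup ⟨⟨g, rfl⟩, hg⟩))
  have W_le : W ≤ U' ⊔ sSup (translates ρ W \ {W}) := by
    refine le_top.trans ((sSup_translates_eq_top ρ U'_ne_bot).symm.trans_le (sSup_le ?_))
    rintro _ ⟨g, rfl⟩
    exact translate_le g
  have disjoint := hind ⟨1, map_apply_one ρ W⟩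
  have U'_eq : U' = W :=
    eq_of_le_of_inf_le_of_le_sup U'_le (disjoint.eq_bot.le.trans bot_le) W_le
  refine Submodule.map_injective_of_injective W.injective_subtype ?_
  rwa [Submodule.map_subtype_top]

lemma isDefinedOver_of_stabilizerRepresentation {F : Type*} [Field F] [Algebra F K] [Module F V]
    [IsScalarTower F K V] [Finite G] (hW : W ≠ ⊥)
    (hind : sSupIndep (translates ρ W))
    (hF : IsDefinedOver F (stabilizerRepresentation ρ W)) : IsDefinedOver F ρ := by
  classical
  obtain ⟨n, b, hb⟩ := hF
  have exists_eq (U : translates ρ W) : ∃ g, W.map (ρ g) = U := U.2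
  choose c hc using exists_eq
  have internal : DirectSum.IsInternal fun U : translates ρ W => (U : Submodule K V) :=
    DirectSum.isInternal_submodule_of_iSupIndep_of_iSup_eq_top ((sSupIndep_iff _).mp hind)
      (by rw [← sSup_eq_iSup', sSup_translates_eq_top ρ hW])
  let basisOf (U : translates ρ W) : Basis (Fin n) K (U : Submodule K V) :=
    (b.map (Submodule.equivMapOfInjective (ρ (c U)) (ρ.apply_bijective _).1 W)).map
      (LinearEquiv.ofEq _ _ (hc U))
  let B := internal.collectedBasis basisOf
  have B_apply (U i) : B ⟨U, i⟩ = ρ (c U) (b i) := by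
    rw [DirectSum.IsInternal.collectedBasis_coe]
    rfl
  have : Finite (translates ρ W) := Set.finite_range _
  refine .of_basis B ?_
  rintro g ⟨U, i⟩
  let U' : translates ρ W := ⟨U.1.map (ρ g), g * c U, by
    rw [← hc U, map_apply_map_apply]⟩
  let h : submoduleStabilizer ρ W := ⟨(c U')⁻¹ * (g * c U),
    inv_mul_mem_submoduleStabilizer ρ (by rw [← map_apply_map_apply, hc, hc])⟩
  have apply_B : ρ g (B ⟨U, i⟩) = ρ (c U') (stabilizerRepresentation ρ W h (b i)) := by
    rw [B_apply, coe_stabilizerRepresentation_apply, ← End.mul_apply, ← End.mul_apply, ← map_mul,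
      ← map_mul, mul_inv_cancel_left]
  let L : W →ₗ[F] V := ((ρ (c U')).comp W.subtype).restrictScalars F
  have map_span_le : (Submodule.span F (Set.range b)).map L ≤ Submodule.span F (Set.range B) := by
    rw [Submodule.map_span, Submodule.span_le]
    rintro _ ⟨_, ⟨j, rfl⟩, rfl⟩
    exact Submodule.subset_span ⟨⟨U', j⟩, B_apply U' j⟩
  exact apply_B ▸ map_span_le (Submodule.mem_map_of_mem (hb h i))

end Stabilizer

end Clifford

section FaithfulQuotient

variable {K G H V : Type*} [Field K] [Group G] [Group H] [AddCommGroup V] [Module K V]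

lemma isIrreducible_of_comp (σ : Representation K H V) (f : G →* H)
    (hσ : Representation.IsIrreducible (σ.comp f)) : σ.IsIrreducible :=
  have h := isIrreducible_iff_forall_invariant.mp hσ
  isIrreducible_iff_forall_invariant.mpr ⟨h.1, fun W hW => h.2 W fun g => hW (f g)⟩

lemma IsDefinedOver.comp {F : Type*} [Field F] [Module F V] {σ : Representation K H V}
    (hσ : IsDefinedOver F σ) (f : G →* H) : IsDefinedOver F (σ.comp f) := by
  obtain ⟨n, b, hb⟩ := hσ
  exact ⟨n, b, fun g => hb (f g)⟩

end FaithfulQuotient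

section OddPGroupRepresentations

theorem isDefinedOver_of_isPGroup {F K : Type*} [Field F] [Field K] [Algebra F K]
    [IsIntegrallyClosedIn F K] {p : ℕ} [Fact p.Prime] (hodd : p ≠ 2) {G : Type*} [Group G]
    [Finite G] (hG : IsPGroup p G) {V : Type*} [AddCommGroup V] [Module K V] [Module F V]
    [IsScalarTower F K V] [FiniteDimensional K V] (ρ : Representation K G V)
    [ρ.IsIrreducible] : IsDefinedOver F ρ := by
  induction hd : finrank K V using Nat.strong_induction_on generalizing G V with
  | h d ih =>
  let f : G →* End K V := ρ
  let ρ' : Representation K (G ⧸ f.ker) V := QuotientGroup.lift f.ker f le_rfl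
  have hG' : IsPGroup p (G ⧸ f.ker) := hG.to_quotient f.ker
  have : ρ'.IsIrreducible :=
    isIrreducible_of_comp ρ' (QuotientGroup.mk' f.ker) ‹ρ.IsIrreducible›
  suffices IsDefinedOver F ρ' from this.comp (QuotientGroup.mk' f.ker)
  by_cases hcyc : IsCyclic (G ⧸ f.ker)
  · exact isDefinedOver_of_isCyclic ρ'
  obtain ⟨A, _, _, hA⟩ := exists_normal_isMulCommutative_not_isCyclic hG' hodd hcyc
  have := nontrivial_of_isIrreducible ρ
  have faithful : Function.Injective ρ' := (QuotientGroup.injective_lift_iff _ f le_rfl).mpr rfl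
  obtain ⟨W, hbot, htop, hind⟩ := exists_sSupIndep_translates ρ' A faithful hA
  have := isIrreducible_stabilizerRepresentation ρ' hbot hind
  exact isDefinedOver_of_stabilizerRepresentation ρ' hbot hind
    (ih (finrank K W) (hd ▸ Submodule.finrank_lt htop) (hG'.to_subgroup _)
      (stabilizerRepresentation ρ' W) rfl)

end OddPGroupRepresentations

section MatrixRepresentations

lemma exists_comp_eq_of_forall_mem_mrange {M N P : Type*} [MulOneClass M] [MulOneClass N]
    [MulOneClass P] {f : M →* N} (hf : Function.Injective f) (g : P →* N)
    (hg : ∀ x, g x ∈ MonoidHom.mrange f) : ∃ g' : P →* M, f.comp g' = g := by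
  let e : M ≃* MonoidHom.mrange f := .ofBijective f.mrangeRestrict
    ⟨fun _ _ h => hf (congrArg Subtype.val h), f.mrangeRestrict_surjective⟩
  exact ⟨e.symm.toMonoidHom.comp (g.codRestrict _ hg),
    MonoidHom.ext fun x => congrArg Subtype.val (e.apply_symm_apply ⟨g x, hg x⟩)⟩

lemma IsDefinedOver.exists_toMatrix_eq_map {F K G V : Type*} [Field F] [Field K] [Algebra F K]
    [Group G] [AddCommGroup V] [Module K V] [Module F V] [IsScalarTower F K V]
    {ρ : Representation K G V} (h : IsDefinedOver F ρ) :
    ∃ (n : ℕ) (b : Basis (Fin n) K V) (Q : G →* Matrix (Fin n) (Fin n) F),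
      ∀ g, LinearMap.toMatrix b b (ρ g) = (Q g).map (algebraMap F K) := by
  obtain ⟨n, b, hb⟩ := h
  let φ : Matrix (Fin n) (Fin n) F →+* Matrix (Fin n) (Fin n) K := (algebraMap F K).mapMatrix
  let P : G →* Matrix (Fin n) (Fin n) K := (LinearMap.toMatrixAlgEquiv b : _ →* _).comp ρ
  have P_mem (g : G) : P g ∈ MonoidHom.mrange φ.toMonoidHom := by
    have entry_mem (i j) : ∃ x : F, algebraMap F K x = P g i j := by
      have := (b.mem_span_iff_repr_mem F _).mp (hb g j) i
      rwa [← LinearMap.toMatrix_apply b b] at this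
    choose Q hQ using entry_mem
    exact ⟨.of Q, Matrix.ext hQ⟩
  obtain ⟨Q, hQ⟩ := exists_comp_eq_of_forall_mem_mrange
    (Matrix.map_injective (algebraMap F K).injective) P P_mem
  exact ⟨n, b, Q, fun g => (DFunLike.congr_fun hQ g).symm⟩

variable {K G : Type*} [Field K] [Group G] {n : ℕ} {ρ : G →* GL (Fin n) K}

variable (ρ) in
/-- The representation on column vectors given by a matrix representation; it is used to pass
from matrices to representations on arbitrary vector spaces. -/
noncomputable def vectorRepresentation : Representation K G (Fin n → K) :=
  ((Matrix.toLinAlgEquiv' : Matrix (Fin n) (Fin n) K ≃ₐ[K] _) :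
    Matrix (Fin n) (Fin n) K →* End K (Fin n → K)).comp ((Units.coeHom _).comp ρ)

lemma toMatrix'_vectorRepresentation (g : G) :
    LinearMap.toMatrix' (vectorRepresentation ρ g) = ρ g :=
  LinearMap.toMatrix'_toLin' _

lemma isIrreducible_vectorRepresentation (hirr : IsIrreducibleRep ρ) :
    (vectorRepresentation ρ).IsIrreducible :=
  have : Nonempty (Fin n) := ⟨⟨0, hirr.1⟩⟩
  isIrreducible_iff_forall_invariant.mpr ⟨inferInstance, hirr.2⟩

lemma descends_of_isDefinedOver {k : Type*} [Field k] [Algebra k K] {F : IntermediateField k K}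
    (h : IsDefinedOver F (vectorRepresentation ρ)) : Descends ρ F := by
  obtain ⟨m, b, Q, hQ⟩ := h.exists_toMatrix_eq_map
  obtain rfl : n = m := by simpa using finrank_eq_card_basis b
  let e := Pi.basisFun K (Fin n)
  let M : GL (Fin n) K :=
    ⟨e.toMatrix b, b.toMatrix e, e.toMatrix_mul_toMatrix_flip b, b.toMatrix_mul_toMatrix_flip e⟩
  refine ⟨Q.toHomUnits, M, fun g => Units.ext ?_⟩
  calc (ρ g : Matrix (Fin n) (Fin n) K)
      = e.toMatrix b * LinearMap.toMatrix b b (vectorRepresentation ρ g) * b.toMatrix e := by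
        rw [← toMatrix'_vectorRepresentation]
        exact (basis_toMatrix_mul_linearMap_toMatrix_mul_basis_toMatrix e b e b _).symm
    _ = e.toMatrix b * (Q g).map (algebraMap F K) * b.toMatrix e := by rw [hQ]

end MatrixRepresentations

end Representations

theorem ed_zero_of_odd_p_group_general {p : ℕ} (hp : Nat.Prime p) (hodd : p ≠ 2)
    {k : Type*} [Field k] {K : Type*} [Field K] [Algebra k K]
    {G : Type*} [Group G] [Finite G] (hG : IsPGroup p G) {n : ℕ}
    (ρ : G →* GL (Fin n) K) (hirr : IsIrreducibleRep ρ) :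
    ∃ K₀ : IntermediateField k K, Algebra.IsAlgebraic k K₀ ∧ Descends ρ K₀ := by
  have : Fact p.Prime := ⟨hp⟩
  have : IsIntegrallyClosedIn (algebraicClosure k K) K := .of_isIntegralClosure k
  have := isIrreducible_vectorRepresentation hirr
  exact ⟨algebraicClosure k K, inferInstance,
    descends_of_isDefinedOver (isDefinedOver_of_isPGroup hodd hG (vectorRepresentation ρ))⟩

/-- A variant of a theorem of Schilling, odd case: if `p` is an odd prime, `k` a field of
characteristic `0`, `G` a finite `p`-group, and `ρ : G → GL_n(K)` a `K`-irreducible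
representation whose character takes values in `k`, then `ρ` descends to an intermediate
field that is algebraic over `k`; i.e. `ed(ρ) = 0`. -/
theorem ed_zero_of_odd_p_group {p : ℕ} (hp : Nat.Prime p) (hodd : p ≠ 2)
    {k : Type*} [Field k] [CharZero k]
    {K : Type*} [Field K] [Algebra k K]
    {G : Type*} [Group G] [Finite G] (hG : IsPGroup p G) {n : ℕ}
    (ρ : G →* GL (Fin n) K) (hirr : IsIrreducibleRep ρ)
    (hχ : ∀ g : G, repChar ρ g ∈ (algebraMap k K).range) :
    ∃ K₀ : IntermediateField k K, Algebra.IsAlgebraic k K₀ ∧ Descends ρ K₀ :=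
  ed_zero_of_odd_p_group_general hp hodd hG ρ hirr
end

section
/- For every integer l ≥ 0 there exist a finite 2-group G, a field extension K/ℚ, an integer n, and a K-irreducible representation ρ : G → GL_n(K) whose character takes values in ℚ, such that the essential dimension of ρ over ℚ equals 2^l; that is, ρ descends to some intermediate field ℚ ⊆ K₀ ⊆ K with trdeg_ℚ(K₀) = 2^l, and ρ does not descend to any intermediate field of transcendence degree over ℚ smaller than 2^l. -/
open Matrix

/-- The transcendence degree of `K₀` over `k` is at most `d`. -/
def TrdegLE {k K : Type*} [Field k] [Field K] [Algebra k K]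
    (K₀ : IntermediateField k K) (d : ℕ) : Prop :=
  ∀ s : Finset K₀,
    AlgebraicIndependent k (fun x : {y : K₀ // y ∈ s} => (x : K₀)) → s.card ≤ d

/-- The transcendence degree of `K₀` over `k` equals `d`. -/
def TrdegEq {k K : Type*} [Field k] [Field K] [Algebra k K]
    (K₀ : IntermediateField k K) (d : ℕ) : Prop :=
  TrdegLE K₀ d ∧
  (∃ s : Finset K₀,
      AlgebraicIndependent k (fun x : {y : K₀ // y ∈ s} => (x : K₀)) ∧ s.card = d)

/-- The transcendence degree of `K₀` over `k` is (strictly) less than `d`. -/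
def TrdegLT {k K : Type*} [Field k] [Field K] [Algebra k K]
    (K₀ : IntermediateField k K) (d : ℕ) : Prop :=
  ∀ s : Finset K₀,
    AlgebraicIndependent k (fun x : {y : K₀ // y ∈ s} => (x : K₀)) → s.card < d

/-- A witness that there is a `K`-irreducible representation of a finite `2`-group over
a field extension `K/ℚ`, with rational character, whose essential dimension over `ℚ` is
exactly `2^l`. -/
structure SchillingWitness (l : ℕ) : Type 1 where
  G : Type
  K : Type
  [grp : Group G]
  [fin : Finite G]
  [field_K : Field K]
  [alg : Algebra ℚ K]
  two_group : IsPGroup 2 G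
  n : ℕ
  ρ : G →* GL (Fin n) K
  irred : IsIrreducibleRep ρ
  char_rat : ∀ g : G, repChar ρ g ∈ (algebraMap ℚ K).range
  descends_to_ed : ∃ K₀ : IntermediateField ℚ K, Descends ρ K₀ ∧ TrdegEq K₀ (2 ^ l)
  not_below_ed : ∀ K₀ : IntermediateField ℚ K, TrdegLT K₀ (2 ^ l) → ¬ Descends ρ K₀

/-! Let `k = ℚ(ζ)` with `ζ` of order `2 ^ (l + 2)`, `Γ = Gal(k/ℚ)`, `τ ∈ Γ` complex conjugation and
`H ≤ Γ` the stabilizer of `√-1`, so that `Γ = H × {1, τ}` and `H` has order `2 ^ l`. Let `Γ` act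
semilinearly on `L = k(x_h : h ∈ H)`, with `H` permuting the `x_h` by translation and
`τ x_h = -1 / x_h`, and let `K = L^Γ`. Since `x_1 * τ x_1 = -1`, the maps `v ↦ ζ v` and
`v ↦ x_1 * τ v` are an irreducible `K`-representation of a generalized quaternion group on `L`. If
it descends to `K₀`, then some `y ∈ K₀(ζ)` satisfies `y * τ y = -1`, and `trdeg K₀ ≥ 2 ^ l` follows
once the conjugates `y_h = h y` are known to be algebraically independent over `k`.

For this it suffices that `[L : k(y_h : h ∈ H)]` is odd, an infinite degree counting as `0`. Modulo
`2`, the degree of `L` over the subfield generated by a family is additive when an entry `u / v` is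
split into `u` and `v`, provided all the norms `z * τ z` of the entries lie in `k`: if `Φ(u, v) = 0`
is the equation of minimal degree over the field `F` generated by the other entries, applying `τ`
shows that the support of `Φ` is symmetric about the centre of its bidegree rectangle, whence
`deg_X Φ + deg_Y Φ` is the sum of the largest and the smallest total degree of a monomial of `Φ`,
while the difference of these two total degrees gives `[F(u, v) : F(u / v)]`.

Splitting every entry of the family `x_h / y_h` expands its degree as a sum over the subsets of `H`.
The `2`-group `H` acts on these terms, and only `∅` and `H` survive modulo `2`, contributing
`[L : k(x_h)] = 1` and `[L : k(y_h)]`. The left-hand side is even: the `w_h = x_h / y_h` have norm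
`1`, so comparing coefficients shows that no element of `k(w_h)` has norm `-1` when the `w_h` are
independent; hence the semilinear map `J v = x_1 * τ v`, for which `J² = -1`, makes `L` of even
dimension over `k(w_h)`. -/

section PlaneCurves

open Polynomial IntermediateField
open scoped Polynomial.Bivariate

variable {F E : Type*} [Field F] [Field E] [Algebra F E] {u v : E} {Φ : F[X][Y]}

/-- The `F[X]`-algebra structure on `F(u)` given by `X ↦ u`. -/
noncomputable abbrev adjoinSimplePolynomialAlgebra (F : Type*) {E : Type*} [Field F] [Field E]
    [Algebra F E] (u : E) : Algebra F[X] F⟮u⟯ :=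
  (aeval (AdjoinSimple.gen F u)).toRingHom.toAlgebra

attribute [local instance] adjoinSimplePolynomialAlgebra

theorem coe_algebraMap_polynomial_adjoinSimple (p : F[X]) :
    (algebraMap F[X] F⟮u⟯ p : E) = aeval u p := by
  change algebraMap F⟮u⟯ E (aeval (AdjoinSimple.gen F u) p) = _
  rw [← aeval_algebraMap_apply, AdjoinSimple.algebraMap_gen]

theorem isFractionRing_polynomial_adjoinSimple (hu : Transcendental F u) :
    IsFractionRing F[X] F⟮u⟯ := by
  have : FaithfulSMul F[X] F⟮u⟯ := by
    rw [faithfulSMul_iff_algebraMap_injective]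
    refine fun p q h ↦ transcendental_iff_injective.1 hu ?_
    rw [← coe_algebraMap_polynomial_adjoinSimple, h, coe_algebraMap_polynomial_adjoinSimple]
  refine IsFractionRing.of_field _ _ fun z ↦ ?_
  obtain ⟨r, s, hz⟩ := (mem_adjoin_simple_iff F (z : E)).1 z.2
  refine ⟨r, s, Subtype.ext ?_⟩
  rw [hz]
  push_cast
  rw [coe_algebraMap_polynomial_adjoinSimple, coe_algebraMap_polynomial_adjoinSimple]

theorem exists_map_eq_C_mul (hu : Transcendental F u) (q : F⟮u⟯[X]) :
    ∃ b : F[X], b ≠ 0 ∧ ∃ p : F[X][Y],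
      p.map (algebraMap F[X] F⟮u⟯) = C (algebraMap F[X] F⟮u⟯ b) * q := by
  have := isFractionRing_polynomial_adjoinSimple hu
  obtain ⟨b, hb, hbq⟩ := IsLocalization.integerNormalization_spec (nonZeroDivisors F[X]) q
  refine ⟨b, nonZeroDivisors.ne_zero hb, _, hbq.trans ?_⟩
  rw [Algebra.smul_def, IsScalarTower.algebraMap_apply F[X] F⟮u⟯ F⟮u⟯[X], algebraMap_eq]

theorem aevalAeval_eq_aeval_map (p : F[X][Y]) :
    aevalAeval u v p = aeval v (p.map (algebraMap F[X] F⟮u⟯)) := by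
  induction p using Polynomial.induction_on' with
  | add p q hp hq => rw [map_add, hp, hq, Polynomial.map_add, map_add]
  | monomial n a =>
    rw [← C_mul_X_pow_eq_monomial, map_mul, map_pow, aevalAeval_C, aevalAeval_Y,
      ← coe_algebraMap_polynomial_adjoinSimple]
    simp

theorem natDegree_ne_zero_of_aevalAeval_eq_zero (hu : Transcendental F u) (hΦ : Φ ≠ 0)
    (h0 : aevalAeval u v Φ = 0) : Φ.natDegree ≠ 0 := by
  rw [Ne, natDegree_eq_zero]
  rintro ⟨a, rfl⟩
  rw [aevalAeval_C] at h0
  exact hΦ (by rw [transcendental_iff.1 hu a h0, C_0])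

theorem associated_minpoly_map_of_irreducible (hu : Transcendental F u) (hirr : Irreducible Φ)
    (h0 : aevalAeval u v Φ = 0) :
    Associated (minpoly F⟮u⟯ v) (Φ.map (algebraMap F[X] F⟮u⟯)) := by
  have := isFractionRing_polynomial_adjoinSimple hu
  have hprim := hirr.isPrimitive (natDegree_ne_zero_of_aevalAeval_eq_zero hu hirr.ne_zero h0)
  have hirr' := (hprim.irreducible_iff_irreducible_map_fraction_map (K := F⟮u⟯)).1 hirr
  rw [aevalAeval_eq_aeval_map] at h0
  have hint : IsIntegral F⟮u⟯ v := IsAlgebraic.isIntegral ⟨_, hirr'.ne_zero, h0⟩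
  exact (minpoly.irreducible hint).associated_of_dvd hirr' (minpoly.dvd _ _ h0)

/-- `Φ` is an equation of the plane curve over `F` with generic point `(u, v)`: it generates the
ideal of all polynomials vanishing at `(u, v)`. -/
def IsCurveEquation (u v : E) (Φ : F[X][Y]) : Prop :=
  ∀ p : F[X][Y], aevalAeval u v p = 0 ↔ Φ ∣ p

namespace IsCurveEquation

theorem aevalAeval_eq_zero (h : IsCurveEquation u v Φ) : aevalAeval u v Φ = 0 :=
  (h Φ).2 dvd_rfl

theorem prime (h : IsCurveEquation u v Φ) (hΦ : Φ ≠ 0) : Prime Φ := by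
  refine ⟨hΦ, fun hunit ↦ ?_, fun p q hpq ↦ ?_⟩
  · have h1 := (h 1).2 hunit.dvd
    rw [map_one] at h1
    exact one_ne_zero h1
  · rwa [← h, map_mul, mul_eq_zero, h, h] at hpq

theorem swap (h : IsCurveEquation u v Φ) : IsCurveEquation v u (Bivariate.swap Φ) := fun p ↦ by
  have hp := h (Bivariate.swap p)
  rw [Bivariate.aevalAeval_swap] at hp
  rw [hp, ← map_dvd_iff (Bivariate.swap (R := F)), Bivariate.swap_swap_apply]

theorem of_irreducible_of_transcendental (hu : Transcendental F u) (hirr : Irreducible Φ)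
    (h0 : aevalAeval u v Φ = 0) : IsCurveEquation u v Φ := by
  have := isFractionRing_polynomial_adjoinSimple hu
  refine fun p ↦ ⟨fun hp ↦ ?_, fun ⟨q, hq⟩ ↦ by rw [hq, map_mul, h0, zero_mul]⟩
  obtain ⟨q, hq⟩ : Φ.map (algebraMap F[X] F⟮u⟯) ∣ p.map (algebraMap F[X] F⟮u⟯) := by
    rw [← (associated_minpoly_map_of_irreducible hu hirr h0).dvd_iff_dvd_left]
    exact minpoly.dvd _ _ (by rwa [← aevalAeval_eq_aeval_map])
  obtain ⟨b, hb, r, hr⟩ := exists_map_eq_C_mul hu q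
  have hclear : C b * p = Φ * r := by
    apply map_injective _ (IsFractionRing.injective F[X] F⟮u⟯)
    rw [Polynomial.map_mul, Polynomial.map_mul, hr, hq, map_C, mul_left_comm]
  refine (hirr.prime.dvd_or_dvd (Dvd.intro _ hclear.symm)).resolve_left fun hdvd ↦ ?_
  have hle := natDegree_le_of_dvd hdvd (C_ne_zero.2 hb)
  rw [natDegree_C, Nat.le_zero] at hle
  exact natDegree_ne_zero_of_aevalAeval_eq_zero hu hirr.ne_zero h0 hle

theorem of_irreducible (huv : ¬(IsAlgebraic F u ∧ IsAlgebraic F v)) (hirr : Irreducible Φ)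
    (h0 : aevalAeval u v Φ = 0) : IsCurveEquation u v Φ := by
  by_cases hu : IsAlgebraic F u
  · have := of_irreducible_of_transcendental (fun hv ↦ huv ⟨hu, hv⟩)
      ((MulEquiv.irreducible_iff (Bivariate.swap (R := F))).2 hirr)
      (by rwa [Bivariate.aevalAeval_swap])
    simpa only [Bivariate.swap_swap_apply] using this.swap
  · exact of_irreducible_of_transcendental hu hirr h0

theorem natDegree_minpoly (h : IsCurveEquation u v Φ) (hΦ : Φ ≠ 0)
    (huv : ¬(IsAlgebraic F u ∧ IsAlgebraic F v)) :
    (minpoly F⟮u⟯ v).natDegree = Φ.natDegree := by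
  by_cases hu : IsAlgebraic F u
  · have hv : ¬IsIntegral F⟮u⟯ v := fun hv ↦ by
      have := isAlgebraic_adjoin_simple hu.isIntegral
      exact huv ⟨hu, hv.isAlgebraic.restrictScalars F⟩
    have hdvd : Φ ∣ C (minpoly F u) := (h _).1 (by rw [aevalAeval_C, minpoly.aeval])
    have hle := natDegree_le_of_dvd hdvd (C_ne_zero.2 (minpoly.ne_zero hu.isIntegral))
    rw [natDegree_C, Nat.le_zero] at hle
    rw [minpoly.eq_zero hv, hle, natDegree_zero]
  · have := isFractionRing_polynomial_adjoinSimple hu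
    have hassoc := associated_minpoly_map_of_irreducible hu (h.prime hΦ).irreducible
      h.aevalAeval_eq_zero
    rw [natDegree_eq_of_degree_eq (degree_eq_degree_of_associated hassoc),
      natDegree_map_eq_of_injective (IsFractionRing.injective F[X] F⟮u⟯)]

end IsCurveEquation

theorem exists_isCurveEquation (huv : ¬(IsAlgebraic F u ∧ IsAlgebraic F v)) {p : F[X][Y]}
    (hp : p ≠ 0) (h0 : aevalAeval u v p = 0) : ∃ Φ : F[X][Y], Φ ≠ 0 ∧ IsCurveEquation u v Φ := by
  obtain ⟨f, hf, c, hc⟩ := WfDvdMonoid.exists_factors p hp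
  rw [← hc, map_mul, (c.isUnit.map (aevalAeval u v)).mul_left_eq_zero, map_multiset_prod,
    Multiset.prod_eq_zero_iff] at h0
  obtain ⟨Φ, hΦ, h0⟩ := Multiset.mem_map.1 h0
  exact ⟨Φ, (hf Φ hΦ).ne_zero, .of_irreducible huv (hf Φ hΦ) h0⟩

end PlaneCurves

section CentralSymmetry

open Polynomial
open scoped Polynomial.Bivariate

theorem coeff_coeff_swap {R : Type*} [CommSemiring R] (p : R[X][Y]) (i j : ℕ) :
    ((Bivariate.swap p).coeff i).coeff j = (p.coeff j).coeff i := by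
  induction p using Polynomial.induction_on' with
  | add p q hp hq => simp only [map_add, coeff_add, hp, hq]
  | monomial n a =>
    induction a using Polynomial.induction_on' with
    | add p q hp hq => simp only [map_add, coeff_add, hp, hq]
    | monomial m a =>
      rw [Bivariate.swap_monomial_monomial]
      simp only [coeff_monomial]
      by_cases h1 : m = i <;> by_cases h2 : n = j <;> simp [h1, h2, coeff_monomial]

theorem natDegree_coeff_le_natDegree_swap {R : Type*} [CommSemiring R] (p : R[X][Y]) (j : ℕ) :
    (p.coeff j).natDegree ≤ (Bivariate.swap p).natDegree := by
  rw [natDegree_le_iff_coeff_eq_zero]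
  intro N hN
  rw [← coeff_coeff_swap, coeff_eq_zero_of_natDegree_lt hN, coeff_zero]

theorem le_natDegree_of_coeff_coeff_ne_zero {R : Type*} [CommSemiring R] {p : R[X][Y]} {i j : ℕ}
    (h : (p.coeff j).coeff i ≠ 0) : i ≤ (Bivariate.swap p).natDegree ∧ j ≤ p.natDegree :=
  ⟨(le_natDegree_of_ne_zero h).trans (natDegree_coeff_le_natDegree_swap p j),
    le_natDegree_of_ne_zero fun h0 ↦ h (by rw [h0, coeff_zero])⟩

theorem sum_range_monomial_monomial {R : Type*} [CommSemiring R] (p : R[X][Y]) :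
    ∑ j ∈ Finset.range (p.natDegree + 1), ∑ i ∈ Finset.range ((Bivariate.swap p).natDegree + 1),
      monomial j (monomial i ((p.coeff j).coeff i)) = p := by
  conv_rhs => rw [p.as_sum_range' _ p.natDegree.lt_succ_self]
  refine Finset.sum_congr rfl fun j _ ↦ ?_
  conv_rhs => rw [(p.coeff j).as_sum_range' ((Bivariate.swap p).natDegree + 1)
    (Nat.lt_succ_of_le (natDegree_coeff_le_natDegree_swap p j)), map_sum]

theorem aevalAeval_monomial_monomial {R S : Type*} [CommRing R] [CommRing S] [Algebra R S]
    (u v : S) (i j : ℕ) (a : R) :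
    aevalAeval u v (monomial j (monomial i a)) = algebraMap R S a * u ^ i * v ^ j := by
  rw [← C_mul_X_pow_eq_monomial, map_mul, map_pow, aevalAeval_C, aevalAeval_Y, aeval_monomial]

theorem aevalAeval_eq_sum_range {R S : Type*} [CommRing R] [CommRing S] [Algebra R S]
    (u v : S) (p : R[X][Y]) :
    aevalAeval u v p = ∑ j ∈ Finset.range (p.natDegree + 1),
      ∑ i ∈ Finset.range ((Bivariate.swap p).natDegree + 1),
        algebraMap R S ((p.coeff j).coeff i) * u ^ i * v ^ j := by
  conv_lhs => rw [← sum_range_monomial_monomial p]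
  simp only [map_sum, aevalAeval_monomial_monomial]

variable {F E : Type*} [Field F] [Field E] [Algebra F E]

/-- The support of `p` is symmetric about the centre of the rectangle formed by the bidegrees
at most that of `p`. -/
def HasCentrallySymmetricSupport (p : F[X][Y]) : Prop :=
  ∀ i j, (p.coeff j).coeff i ≠ 0 →
    (p.coeff (p.natDegree - j)).coeff ((Bivariate.swap p).natDegree - i) ≠ 0

/-- The polynomial `x ^ d * y ^ m * σ(p)(a / x, b / y)`, where `(d, m)` is the bidegree of `p`. -/
noncomputable def centralReflection (σ : F →+* F) (a b : F) (p : F[X][Y]) : F[X][Y] :=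
  ∑ j ∈ Finset.range (p.natDegree + 1), ∑ i ∈ Finset.range ((Bivariate.swap p).natDegree + 1),
    monomial (p.natDegree - j) (monomial ((Bivariate.swap p).natDegree - i)
      (σ ((p.coeff j).coeff i) * a ^ i * b ^ j))

variable {σ : F →+* F} {τ : E →+* E} {a b : F} {u v : E} {p : F[X][Y]}

theorem natDegree_centralReflection_le : (centralReflection σ a b p).natDegree ≤ p.natDegree :=
  natDegree_sum_le_of_forall_le _ _ fun _ _ ↦ natDegree_sum_le_of_forall_le _ _ fun _ _ ↦
    (natDegree_monomial_le _).trans (Nat.sub_le _ _)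

theorem natDegree_swap_centralReflection_le :
    (Bivariate.swap (centralReflection σ a b p)).natDegree ≤ (Bivariate.swap p).natDegree := by
  simp only [centralReflection, map_sum, Bivariate.swap_monomial_monomial]
  exact natDegree_sum_le_of_forall_le _ _ fun _ _ ↦ natDegree_sum_le_of_forall_le _ _ fun _ _ ↦
    (natDegree_monomial_le _).trans (Nat.sub_le _ _)

theorem coeff_coeff_centralReflection {i j : ℕ} (hi : i ≤ (Bivariate.swap p).natDegree)
    (hj : j ≤ p.natDegree) :
    ((centralReflection σ a b p).coeff (p.natDegree - j)).coeff ((Bivariate.swap p).natDegree - i)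
      = σ ((p.coeff j).coeff i) * a ^ i * b ^ j := by
  simp only [centralReflection, finsetSum_coeff]
  rw [Finset.sum_eq_single_of_mem j (Finset.mem_range_succ_iff.2 hj),
    Finset.sum_eq_single_of_mem i (Finset.mem_range_succ_iff.2 hi)]
  · rw [coeff_monomial_same, coeff_monomial_same]
  · intro i' hi' hne
    rw [Finset.mem_range_succ_iff] at hi'
    rw [coeff_monomial_same, coeff_monomial_of_ne _ (by omega)]
  · intro j' hj' hne
    rw [Finset.mem_range_succ_iff] at hj'
    refine Finset.sum_eq_zero fun i' _ ↦ ?_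
    rw [coeff_monomial_of_ne _ (by omega), coeff_zero]

theorem aevalAeval_centralReflection
    (hστ : ∀ c, τ (algebraMap F E c) = algebraMap F E (σ c))
    (hu : u * τ u = algebraMap F E a) (hv : v * τ v = algebraMap F E b) (p : F[X][Y]) :
    aevalAeval u v (centralReflection σ a b p) =
      u ^ (Bivariate.swap p).natDegree * v ^ p.natDegree * τ (aevalAeval u v p) := by
  rw [aevalAeval_eq_sum_range u v p]
  simp only [centralReflection, map_sum, Finset.mul_sum, aevalAeval_monomial_monomial, map_mul,
    map_pow, hστ, ← hu, ← hv]
  refine Finset.sum_congr rfl fun j hj ↦ Finset.sum_congr rfl fun i hi ↦ ?_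
  rw [← pow_sub_mul_pow u (Finset.mem_range_succ_iff.1 hi),
    ← pow_sub_mul_pow v (Finset.mem_range_succ_iff.1 hj)]
  ring

theorem exists_eq_C_C_of_natDegree_eq_zero {r : F[X][Y]} (h : r.natDegree = 0)
    (h' : (Bivariate.swap r).natDegree = 0) : ∃ e : F, r = C (C e) := by
  obtain ⟨f, rfl⟩ := natDegree_eq_zero.1 h
  have hf := natDegree_coeff_le_natDegree_swap (C f) 0
  rw [h', coeff_C_zero, Nat.le_zero] at hf
  obtain ⟨e, rfl⟩ := natDegree_eq_zero.1 hf
  exact ⟨e, rfl⟩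

theorem exists_eq_mul_C_C_of_dvd {q : F[X][Y]} (hq : q ≠ 0) (hdvd : p ∣ q)
    (hle : q.natDegree ≤ p.natDegree)
    (hle' : (Bivariate.swap q).natDegree ≤ (Bivariate.swap p).natDegree) :
    ∃ e : F, q = p * C (C e) := by
  obtain ⟨r, rfl⟩ := hdvd
  have hp := left_ne_zero_of_mul hq
  have hr := right_ne_zero_of_mul hq
  have hinj := (Bivariate.swap (R := F)).injective
  rw [natDegree_mul hp hr] at hle
  rw [map_mul, natDegree_mul ((map_ne_zero_iff _ hinj).2 hp) ((map_ne_zero_iff _ hinj).2 hr)]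
    at hle'
  obtain ⟨e, rfl⟩ := exists_eq_C_C_of_natDegree_eq_zero (r := r) (by omega) (by omega)
  exact ⟨e, rfl⟩

theorem IsCurveEquation.hasCentrallySymmetricSupport
    (hστ : ∀ c, τ (algebraMap F E c) = algebraMap F E (σ c))
    (hu : u * τ u = algebraMap F E a) (hv : v * τ v = algebraMap F E b) (ha : a ≠ 0) (hb : b ≠ 0)
    (h : IsCurveEquation u v p) : HasCentrallySymmetricSupport p := by
  intro i j hij
  obtain ⟨hi, hj⟩ := le_natDegree_of_coeff_coeff_ne_zero hij
  have hcoeff := coeff_coeff_centralReflection (σ := σ) (a := a) (b := b) hi hj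
  have hne : σ ((p.coeff j).coeff i) * a ^ i * b ^ j ≠ 0 :=
    mul_ne_zero (mul_ne_zero ((map_ne_zero σ).2 hij) (pow_ne_zero _ ha)) (pow_ne_zero _ hb)
  have hdvd : p ∣ centralReflection σ a b p := (h _).1 (by
    rw [aevalAeval_centralReflection hστ hu hv, h.aevalAeval_eq_zero, map_zero, mul_zero])
  obtain ⟨e, he⟩ := exists_eq_mul_C_C_of_dvd
    (by rintro h0; exact hne (by rw [← hcoeff, h0, coeff_zero, coeff_zero])) hdvd
    natDegree_centralReflection_le natDegree_swap_centralReflection_le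
  rw [he, coeff_mul_C, coeff_mul_C] at hcoeff
  exact left_ne_zero_of_mul (hcoeff.trans_ne hne)

end CentralSymmetry

section DegreeOverQuotient

open Polynomial IntermediateField
open scoped Polynomial.Bivariate

variable {F E : Type*} [Field F] [Field E] [Algebra F E] {u v : E} {p Φ : F[X][Y]}

/-- The substitution `X ↦ XY`, `Y ↦ Y`, which turns equations satisfied by `(u, v)` into
equations satisfied by `(u / v, v)`. -/
noncomputable def shear (F : Type*) [Field F] : F[X][Y] →ₐ[F] F[X][Y] :=
  aevalAeval (C X * Y) Y

theorem shear_monomial_monomial (i j : ℕ) (a : F) :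
    shear F (monomial j (monomial i a)) = monomial (j + i) (monomial i a) := by
  rw [shear, aevalAeval_monomial_monomial, ← C_mul_X_pow_eq_monomial (n := j + i),
    ← C_mul_X_pow_eq_monomial (n := i)]
  simp only [Polynomial.algebraMap_apply, Algebra.algebraMap_self, RingHom.id_apply, map_mul,
    map_pow]
  ring

theorem coeff_coeff_shear (p : F[X][Y]) (i j : ℕ) :
    ((shear F p).coeff (j + i)).coeff i = (p.coeff j).coeff i := by
  rw [← sum_range_monomial_monomial p]
  simp only [map_sum, shear_monomial_monomial, finsetSum_coeff]
  refine Finset.sum_congr rfl fun j' _ ↦ Finset.sum_congr rfl fun i' _ ↦ ?_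
  simp only [coeff_monomial, apply_ite (coeff · i), coeff_zero]
  grind

theorem exists_coeff_ne_zero_of_coeff_shear_ne_zero {N : ℕ} (h : (shear F p).coeff N ≠ 0) :
    ∃ i ≤ N, (p.coeff (N - i)).coeff i ≠ 0 := by
  by_contra! hall
  refine h (Polynomial.ext fun i ↦ ?_)
  rw [coeff_zero]
  by_cases hi : i ≤ N
  · obtain ⟨j, rfl⟩ := Nat.exists_eq_add_of_le' hi
    rw [coeff_coeff_shear]
    simpa using hall i hi
  · rw [← sum_range_monomial_monomial p]
    simp only [map_sum, shear_monomial_monomial, finsetSum_coeff]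
    refine Finset.sum_eq_zero fun j' _ ↦ Finset.sum_eq_zero fun i' _ ↦ ?_
    simp only [coeff_monomial, apply_ite (coeff · i), coeff_zero]
    grind

theorem shear_injective : Function.Injective (shear F) := by
  refine (injective_iff_map_eq_zero _).2 fun p hp ↦ Polynomial.ext fun j ↦ Polynomial.ext fun i ↦ ?_
  rw [← coeff_coeff_shear, hp]
  simp only [coeff_zero]

theorem aevalAeval_div_shear (hv : v ≠ 0) (p : F[X][Y]) :
    aevalAeval (u / v) v (shear F p) = aevalAeval u v p := by
  conv_lhs => rw [← sum_range_monomial_monomial p]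
  simp only [map_sum, shear_monomial_monomial, aevalAeval_monomial_monomial,
    aevalAeval_eq_sum_range u v p]
  refine Finset.sum_congr rfl fun j _ ↦ Finset.sum_congr rfl fun i _ ↦ ?_
  rw [div_pow, pow_add]
  field_simp

theorem exists_shear_eq_Y_pow_mul (p : F[X][Y]) :
    ∃ (N : ℕ) (q : F[X][Y]), shear F q = Y ^ N * p := by
  refine ⟨(Bivariate.swap p).natDegree, ∑ j ∈ Finset.range (p.natDegree + 1),
    ∑ i ∈ Finset.range ((Bivariate.swap p).natDegree + 1),
      monomial (j + ((Bivariate.swap p).natDegree - i)) (monomial i ((p.coeff j).coeff i)), ?_⟩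
  refine Eq.trans ?_ (congrArg (Y ^ _ * ·) (sum_range_monomial_monomial p))
  simp only [map_sum, shear_monomial_monomial, Finset.mul_sum]
  refine Finset.sum_congr rfl fun j _ ↦ Finset.sum_congr rfl fun i hi ↦ ?_
  rw [X_pow_mul_monomial, add_assoc, Nat.sub_add_cancel (Finset.mem_range_succ_iff.1 hi)]

theorem HasCentrallySymmetricSupport.natDegree_shear_add_natTrailingDegree_shear
    (h : HasCentrallySymmetricSupport p) (hp : p ≠ 0) :
    (shear F p).natDegree + (shear F p).natTrailingDegree =
      p.natDegree + (Bivariate.swap p).natDegree := by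
  have hreflect : ∀ N, (shear F p).coeff N ≠ 0 →
      N ≤ p.natDegree + (Bivariate.swap p).natDegree ∧
        (shear F p).coeff (p.natDegree + (Bivariate.swap p).natDegree - N) ≠ 0 := by
    intro N hN
    obtain ⟨i, hiN, hi⟩ := exists_coeff_ne_zero_of_coeff_shear_ne_zero hN
    obtain ⟨hid, hjm⟩ := le_natDegree_of_coeff_coeff_ne_zero hi
    refine ⟨by omega, fun h0 ↦ h _ _ hi ?_⟩
    rw [← coeff_coeff_shear, show p.natDegree - (N - i) + ((Bivariate.swap p).natDegree - i) =
      p.natDegree + (Bivariate.swap p).natDegree - N by omega, h0, coeff_zero]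
  have hne : shear F p ≠ 0 := (map_ne_zero_iff _ shear_injective).2 hp
  obtain ⟨htop, htop'⟩ := hreflect (shear F p).natDegree (leadingCoeff_ne_zero.2 hne)
  obtain ⟨hbot, hbot'⟩ := hreflect (shear F p).natTrailingDegree
    (trailingCoeff_nonzero_iff_nonzero.2 hne)
  have := natTrailingDegree_le_of_ne_zero htop'
  have := le_natDegree_of_ne_zero hbot'
  omega

theorem exists_isCurveEquation_div (hv : v ≠ 0) (hΦ : Φ ≠ 0) (h : IsCurveEquation u v Φ) :
    ∃ Ψ : F[X][Y], Ψ ≠ 0 ∧ IsCurveEquation (u / v) v Ψ ∧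
      (shear F Φ).natDegree = Ψ.natDegree + (shear F Φ).natTrailingDegree := by
  have hne : shear F Φ ≠ 0 := (map_ne_zero_iff _ shear_injective).2 hΦ
  obtain ⟨n, Ψ, hYΨ, hΨ⟩ := WfDvdMonoid.max_power_factor hne (irreducible_X (R := F[X]))
  have hΨ0 : Ψ ≠ 0 := by
    rintro rfl
    exact hYΨ (dvd_zero _)
  have htrail : (shear F Φ).natTrailingDegree = n := by
    rw [hΨ, mul_comm, natTrailingDegree_mul_X_pow hΨ0, natTrailingDegree_eq_zero.2, zero_add]
    exact .inr fun h0 ↦ hYΨ (X_dvd_iff.2 h0)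
  refine ⟨Ψ, hΨ0, fun p ↦ ⟨fun hp ↦ ?_, ?_⟩, ?_⟩
  · obtain ⟨N, q, hq⟩ := exists_shear_eq_Y_pow_mul p
    obtain ⟨r, rfl⟩ : Φ ∣ q := (h q).1 (by
      rw [← aevalAeval_div_shear hv, hq, map_mul, hp, mul_zero])
    rw [map_mul, hΨ] at hq
    exact (irreducible_X.isRelPrime_iff_not_dvd.2 hYΨ).symm.pow_right.dvd_of_dvd_mul_left
      ((Dvd.intro_left _ rfl).trans ((Dvd.intro _ rfl).trans hq.dvd))
  · rintro ⟨r, rfl⟩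
    have h0 : aevalAeval (u / v) v (Y ^ n * Ψ) = 0 := by
      rw [← hΨ, aevalAeval_div_shear hv, h.aevalAeval_eq_zero]
    rw [map_mul, map_pow, aevalAeval_Y, mul_eq_zero] at h0
    rw [map_mul, h0.resolve_left (pow_ne_zero n hv), zero_mul]
  · rw [htrail, hΨ, natDegree_mul (pow_ne_zero n X_ne_zero) hΨ0, natDegree_X_pow, add_comm]

end DegreeOverQuotient

section DegreeParity

open Polynomial IntermediateField
open scoped Polynomial.Bivariate

attribute [local instance] adjoinSimplePolynomialAlgebra

variable {F E : Type*} [Field F] [Field E] [Algebra F E]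

theorem finrank_adjoin_simple_eq_natDegree_minpoly_mul (u v : E) :
    Module.finrank F⟮u⟯ E = (minpoly F⟮u⟯ v).natDegree * Module.finrank F⟮u, v⟯ E := by
  by_cases hv : IsIntegral F⟮u⟯ v
  · rw [← adjoin.finrank hv, ← adjoin_simple_adjoin_simple]
    exact (Module.finrank_mul_finrank F⟮u⟯ F⟮u⟯⟮v⟯ E).symm
  · rw [minpoly.eq_zero hv, natDegree_zero, zero_mul]
    refine Module.finrank_of_infinite_dimensional fun _ ↦ hv (Algebra.IsIntegral.isIntegral v)

theorem adjoin_pair_div {u v : E} (hv : v ≠ 0) : F⟮u / v, v⟯ = F⟮u, v⟯ := by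
  refine le_antisymm (adjoin_le_iff.2 ?_) (adjoin_le_iff.2 ?_) <;> rintro x (rfl | rfl)
  · exact div_mem (mem_adjoin_pair_left F u v) (mem_adjoin_pair_right F u v)
  · exact mem_adjoin_pair_right F u _
  · have := mul_mem (mem_adjoin_pair_left F (x / v) v) (mem_adjoin_pair_right F (x / v) v)
    rwa [div_mul_cancel₀ _ hv] at this
  · exact mem_adjoin_pair_right F _ _

theorem exists_aevalAeval_eq_zero_of_finrank_adjoin_ne_zero {u : E}
    (h : Module.finrank F⟮u⟯ E ≠ 0) (v : E) : ∃ p : F[X][Y], p ≠ 0 ∧ aevalAeval u v p = 0 := by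
  have : Module.Finite F⟮u⟯ E := Module.finite_of_finrank_pos (Nat.pos_of_ne_zero h)
  by_cases hu : IsAlgebraic F u
  · obtain ⟨p, hp, hpu⟩ := hu
    exact ⟨C p, C_ne_zero.2 hp, by rw [aevalAeval_C, hpu]⟩
  have hv : IsIntegral F⟮u⟯ v := Algebra.IsIntegral.isIntegral v
  obtain ⟨b, hb, p, hp⟩ := exists_map_eq_C_mul hu (minpoly F⟮u⟯ v)
  have := isFractionRing_polynomial_adjoinSimple hu
  refine ⟨p, ?_, by rw [aevalAeval_eq_aeval_map, hp, map_mul, minpoly.aeval, mul_zero]⟩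
  rintro rfl
  rw [Polynomial.map_zero, eq_comm, mul_eq_zero, C_eq_zero, map_eq_zero_iff _
    (IsFractionRing.injective F[X] F⟮u⟯)] at hp
  exact hp.elim hb (minpoly.ne_zero hv)

theorem finrank_eq_zero_of_isAlgebraic (hE : ¬Algebra.IsAlgebraic F E) {u : E}
    (hu : IsAlgebraic F u) : Module.finrank F⟮u⟯ E = 0 := by
  refine Module.finrank_of_infinite_dimensional fun _ ↦ hE ?_
  have := isAlgebraic_adjoin_simple hu.isIntegral
  exact Algebra.IsAlgebraic.trans F F⟮u⟯ E

variable {σ : F →+* F} {τ : E →+* E} {a b : F} {u v : E}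

theorem IsCurveEquation.finrank_adjoin_div {Φ : F[X][Y]} (h : IsCurveEquation u v Φ) (hΦ : Φ ≠ 0)
    (huv : ¬(IsAlgebraic F u ∧ IsAlgebraic F v)) (hv : v ≠ 0)
    (hsymm : HasCentrallySymmetricSupport Φ) :
    (Module.finrank F⟮u / v⟯ E : ZMod 2) = Module.finrank F⟮u⟯ E + Module.finrank F⟮v⟯ E := by
  obtain ⟨Ψ, hΨ0, hΨ, hdeg⟩ := exists_isCurveEquation_div hv hΦ h
  have huv' : ¬(IsAlgebraic F (u / v) ∧ IsAlgebraic F v) := fun ⟨h1, h2⟩ ↦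
    huv ⟨by rw [← div_mul_cancel₀ u hv]; exact h1.mul h2, h2⟩
  have hinj := (Bivariate.swap (R := F)).injective
  rw [finrank_adjoin_simple_eq_natDegree_minpoly_mul (u / v) v,
    finrank_adjoin_simple_eq_natDegree_minpoly_mul u v,
    finrank_adjoin_simple_eq_natDegree_minpoly_mul v u, adjoin_pair_div hv, Set.pair_comm v u,
    hΨ.natDegree_minpoly hΨ0 huv', h.natDegree_minpoly hΦ huv,
    h.swap.natDegree_minpoly ((map_ne_zero_iff _ hinj).2 hΦ) fun h ↦ huv h.symm]
  have hsum := hsymm.natDegree_shear_add_natTrailingDegree_shear hΦ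
  have hparity : (Ψ.natDegree : ZMod 2) = Φ.natDegree + (Bivariate.swap Φ).natDegree := by
    rw [← Nat.cast_add, ← hsum, hdeg, add_assoc, Nat.cast_add, ← two_mul, Nat.cast_mul]
    simp [CharTwo.two_eq_zero (R := ZMod 2)]
  rw [Nat.cast_mul, hparity, Nat.cast_mul, Nat.cast_mul, add_mul]

theorem finrank_adjoin_div_zmod_two (hE : ¬Algebra.IsAlgebraic F E)
    (hστ : ∀ c, τ (algebraMap F E c) = algebraMap F E (σ c))
    (hu : u * τ u = algebraMap F E a) (hv : v * τ v = algebraMap F E b) (ha : a ≠ 0) (hb : b ≠ 0) :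
    (Module.finrank F⟮u / v⟯ E : ZMod 2) = Module.finrank F⟮u⟯ E + Module.finrank F⟮v⟯ E := by
  have hv0 : v ≠ 0 := by
    rintro rfl
    exact hb (by simpa using hv.symm)
  by_cases huv : IsAlgebraic F u ∧ IsAlgebraic F v
  · rw [finrank_eq_zero_of_isAlgebraic hE huv.1, finrank_eq_zero_of_isAlgebraic hE huv.2,
      finrank_eq_zero_of_isAlgebraic hE (div_eq_mul_inv u v ▸ huv.1.mul huv.2.inv),
      Nat.cast_zero, add_zero]
  by_cases hrel : ∃ p : F[X][Y], p ≠ 0 ∧ aevalAeval u v p = 0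
  · obtain ⟨p, hp, h0⟩ := hrel
    obtain ⟨Φ, hΦ, h⟩ := exists_isCurveEquation huv hp h0
    exact h.finrank_adjoin_div hΦ huv hv0 (h.hasCentrallySymmetricSupport hστ hu hv ha hb)
  · have hzero : ∀ w z : E, (∀ p : F[X][Y], p ≠ 0 → aevalAeval w z p = 0 → False) →
        Module.finrank F⟮w⟯ E = 0 := fun w z h ↦ by
      by_contra hw
      obtain ⟨p, hp, h0⟩ := exists_aevalAeval_eq_zero_of_finrank_adjoin_ne_zero hw z
      exact h p hp h0
    have hinj := (Bivariate.swap (R := F)).injective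
    rw [hzero u v fun p hp h0 ↦ hrel ⟨p, hp, h0⟩,
      hzero v u fun p hp h0 ↦ hrel ⟨Bivariate.swap p, (map_ne_zero_iff _ hinj).2 hp, by
        rwa [Bivariate.aevalAeval_swap]⟩, hzero (u / v) v fun p hp h0 ↦ ?_, Nat.cast_zero, add_zero]
    obtain ⟨N, q, hq⟩ := exists_shear_eq_Y_pow_mul p
    refine hrel ⟨q, ?_, by rw [← aevalAeval_div_shear hv0, hq, map_mul, h0, mul_zero]⟩
    rintro rfl
    rw [map_zero] at hq
    exact mul_ne_zero (pow_ne_zero N X_ne_zero) hp hq.symm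

end DegreeParity

section AntilinearStructure

variable {M : Type*} [Field M] {σ : M →+* M}

theorem linearIndependent_pair_of_semilinear_apply_apply_eq_neg {V : Type*} [AddCommGroup V]
    [Module M V] (J : V →ₛₗ[σ] V) (hJ : ∀ v, J (J v) = -v) (hσ : ∀ c, c * σ c ≠ -1) {v : V}
    (hv : v ≠ 0) : LinearIndependent M ![v, J v] := by
  rw [LinearIndependent.pair_iff' hv]
  intro c hc
  have h := hJ v
  rw [← hc, map_smulₛₗ, ← hc, smul_smul, ← sub_eq_zero, sub_neg_eq_add] at h
  have h0 : (c * σ c + 1) • v = 0 := by rw [add_smul, one_smul, mul_comm, h]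
  exact hσ c (eq_neg_of_add_eq_zero_left ((smul_eq_zero.1 h0).resolve_right hv))

theorem even_finrank_of_semilinear_apply_apply_eq_neg {V : Type*} [AddCommGroup V] [Module M V]
    (J : V →ₛₗ[σ] V) (hJ : ∀ v, J (J v) = -v) (hσ : ∀ c, c * σ c ≠ -1) :
    Even (Module.finrank M V) := by
  by_cases hfin : Module.Finite M V
  swap
  · rw [Module.finrank_of_infinite_dimensional hfin]
    exact Even.zero
  induction hn : Module.finrank M V using Nat.strong_induction_on generalizing V with
  | _ n ih =>
    obtain hsub | hnon := subsingleton_or_nontrivial V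
    · rw [← hn, Module.finrank_zero_of_subsingleton]
      exact Even.zero
    obtain ⟨v, hv⟩ := exists_ne (0 : V)
    let W := Submodule.span M (Set.range ![v, J v])
    have hW : Module.finrank M W = 2 := finrank_span_eq_card
      (linearIndependent_pair_of_semilinear_apply_apply_eq_neg J hJ hσ hv)
    have hJW : W ≤ W.comap J := by
      rw [Submodule.span_le]
      rintro _ ⟨i, rfl⟩
      fin_cases i
      · exact Submodule.subset_span ⟨1, rfl⟩
      · change J (J v) ∈ W
        rw [hJ]
        exact W.neg_mem (Submodule.subset_span ⟨0, rfl⟩)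
    have hsum := W.finrank_quotient_add_finrank
    rw [← hn, ← hsum, hW]
    refine (ih _ (by omega) (W.mapQ W J hJW) (fun z ↦ ?_) inferInstance rfl).add even_two
    obtain ⟨z, rfl⟩ := W.mkQ_surjective z
    simp only [Submodule.mkQ_apply, Submodule.mapQ_apply, hJ, Submodule.Quotient.mk_neg]

end AntilinearStructure

section NormNegOne

open IntermediateField MvPolynomial

variable {ι k L : Type*} [Field k] [Field L] [Algebra k L] {τ₀ : k →+* k} {τ : L →+* L}

/-- The polynomial `x ^ N * τ₀(P)(x⁻¹)`. It describes the conjugate of `P(w)` when every `w i` has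
norm `1`. -/
noncomputable def conjReverse (τ₀ : k →+* k) (N : ι →₀ ℕ) (P : MvPolynomial ι k) :
    MvPolynomial ι k :=
  ∑ a ∈ P.support, monomial (N - a) (τ₀ (P.coeff a))

theorem aeval_conjReverse (hτ : ∀ c, τ (algebraMap k L c) = algebraMap k L (τ₀ c)) {w : ι → L}
    (hw : ∀ i, w i * τ (w i) = 1) {N : ι →₀ ℕ} {P : MvPolynomial ι k}
    (hP : ∀ a ∈ P.support, a ≤ N) :
    aeval w (conjReverse τ₀ N P) = (N.prod fun i n ↦ w i ^ n) * τ (aeval w P) := by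
  conv_rhs => rw [P.as_sum]
  rw [conjReverse, map_sum, map_sum, map_sum, Finset.mul_sum]
  refine Finset.sum_congr rfl fun a ha ↦ ?_
  have hmon : (a.prod fun i n ↦ w i ^ n) * τ (a.prod fun i n ↦ w i ^ n) = 1 := by
    rw [map_finsuppProd, ← Finsupp.prod_mul]
    simp only [map_pow, ← mul_pow, hw, one_pow, Finsupp.prod_fun_one]
  have hN : (N.prod fun i n ↦ w i ^ n) =
      ((N - a).prod fun i n ↦ w i ^ n) * a.prod fun i n ↦ w i ^ n := by
    rw [← Finsupp.prod_add_index' (fun _ ↦ pow_zero _) fun _ _ _ ↦ pow_add _ _ _,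
      tsub_add_cancel_of_le (hP a ha)]
  rw [aeval_monomial, aeval_monomial, map_mul, hτ, hN]
  linear_combination (-algebraMap k L (τ₀ (coeff a P)) * (N - a).prod fun i n ↦ w i ^ n) * hmon

theorem coeff_mul_conjReverse {N : ι →₀ ℕ} {P : MvPolynomial ι k} (hP : ∀ a ∈ P.support, a ≤ N) :
    (P * conjReverse τ₀ N P).coeff N = ∑ a ∈ P.support, P.coeff a * τ₀ (P.coeff a) := by
  classical
  rw [conjReverse, Finset.mul_sum, coeff_sum]
  refine Finset.sum_congr rfl fun a ha ↦ ?_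
  have h := coeff_mul_monomial a (N - a) (τ₀ (P.coeff a)) P
  rwa [add_tsub_cancel_of_le (hP a ha)] at h

theorem sum_coeff_mul_add_sum_coeff_mul_eq_zero
    (hτ : ∀ c, τ (algebraMap k L c) = algebraMap k L (τ₀ c)) {w : ι → L}
    (hw : ∀ i, w i * τ (w i) = 1) (hind : AlgebraicIndependent k w) {P Q : MvPolynomial ι k}
    (h : aeval w P * τ (aeval w P) + aeval w Q * τ (aeval w Q) = 0) :
    ∑ a ∈ P.support, P.coeff a * τ₀ (P.coeff a) +
      ∑ a ∈ Q.support, Q.coeff a * τ₀ (Q.coeff a) = 0 := by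
  classical
  set N := (P.support ∪ Q.support).sup id
  have hP : ∀ a ∈ P.support, a ≤ N := fun a ha ↦
    Finset.le_sup (f := id) (Finset.mem_union_left _ ha)
  have hQ : ∀ a ∈ Q.support, a ≤ N := fun a ha ↦
    Finset.le_sup (f := id) (Finset.mem_union_right _ ha)
  have hzero : P * conjReverse τ₀ N P + Q * conjReverse τ₀ N Q = 0 := by
    refine hind.eq_zero_of_aeval_eq_zero _ ?_
    rw [map_add, map_mul, map_mul, aeval_conjReverse hτ hw hP, aeval_conjReverse hτ hw hQ]
    linear_combination (N.prod fun i n ↦ w i ^ n) * h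
  rw [← coeff_mul_conjReverse hP, ← coeff_mul_conjReverse hQ, ← coeff_add, hzero, coeff_zero]

theorem re_map_sum_coeff_mul {σ : k →+* ℂ} (hσ : ∀ c, σ (τ₀ c) = star (σ c))
    (P : MvPolynomial ι k) : (σ (∑ a ∈ P.support, P.coeff a * τ₀ (P.coeff a))).re =
      ∑ a ∈ P.support, Complex.normSq (σ (P.coeff a)) := by
  simp only [map_sum, map_mul, hσ, Complex.star_def, Complex.mul_conj, Complex.re_sum,
    Complex.ofReal_re]

theorem sum_normSq_coeff_pos (σ : k →+* ℂ) {P : MvPolynomial ι k} (hP : P ≠ 0) :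
    0 < ∑ a ∈ P.support, Complex.normSq (σ (P.coeff a)) :=
  Finset.sum_pos (fun _ ha ↦ Complex.normSq_pos.2 ((map_ne_zero σ).2 (mem_support_iff.1 ha)))
    (support_nonempty.2 hP)

theorem mul_map_ne_neg_one_of_mem_adjoin {σ : k →+* ℂ} (hσ : ∀ c, σ (τ₀ c) = star (σ c))
    (hτ : ∀ c, τ (algebraMap k L c) = algebraMap k L (τ₀ c)) {w : ι → L}
    (hw : ∀ i, w i * τ (w i) = 1) (hind : AlgebraicIndependent k w) {y : L}
    (hy : y ∈ adjoin k (Set.range w)) : y * τ y ≠ -1 := by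
  obtain ⟨P, Q, rfl⟩ := (mem_adjoin_range_iff k w y).1 hy
  intro hnorm
  have hQ : aeval w Q ≠ 0 := by
    intro h0
    simp [h0] at hnorm
  have hτQ : τ (aeval w Q) ≠ 0 := (map_ne_zero τ).2 hQ
  have hsum := sum_coeff_mul_add_sum_coeff_mul_eq_zero hτ hw hind (P := P) (Q := Q) (by
    rw [map_div₀] at hnorm
    field_simp at hnorm
    linear_combination hnorm)
  have hreal := congrArg (fun c ↦ (σ c).re) hsum
  simp only [map_add, Complex.add_re, re_map_sum_coeff_mul hσ, map_zero, Complex.zero_re] at hreal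
  have hPnonneg : 0 ≤ ∑ a ∈ P.support, Complex.normSq (σ (P.coeff a)) :=
    Finset.sum_nonneg fun _ _ ↦ Complex.normSq_nonneg _
  have hQpos := sum_normSq_coeff_pos σ (P := Q) fun h0 ↦ hQ (by rw [h0, map_zero])
  linarith

end NormNegOne

section DegreeOverAdjoin

open IntermediateField

variable {ι k L : Type*} [Field k] [Field L] [Algebra k L]

/-- The degree of `L` over the subfield generated over `k` by the family `z`, with value `0` when
this degree is infinite. -/
noncomputable def degOverAdjoin (k : Type*) [Field k] [Algebra k L] (z : ι → L) : ℕ :=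
  Module.finrank (adjoin k (Set.range z)) L

theorem degOverAdjoin_eq_one {z : ι → L} (hz : adjoin k (Set.range z) = ⊤) :
    degOverAdjoin k z = 1 := by
  rw [degOverAdjoin, hz, IntermediateField.finrank_top]

theorem degOverAdjoin_update [DecidableEq ι] (z : ι → L) (i : ι) (u : L) :
    degOverAdjoin k (Function.update z i u) = Module.finrank (adjoin k (z '' {i}ᶜ))⟮u⟯ L := by
  have hrange : Set.range (Function.update z i u) = z '' {i}ᶜ ∪ {u} := by
    rw [← Set.image_univ, ← Set.compl_union_self {i}, Set.image_union, Set.image_singleton,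
      Function.update_self]
    exact congrArg (· ∪ {u}) (Set.image_congr fun j hj ↦ Function.update_of_ne hj u z)
  rw [degOverAdjoin, hrange, ← adjoin_adjoin_left]
  rfl

theorem algebraicIndependent_of_degOverAdjoin_ne_zero [Finite ι] {x : ι → L}
    (hx : AlgebraicIndependent k x) {z : ι → L} (hz : degOverAdjoin k z ≠ 0) :
    AlgebraicIndependent k z := by
  have : FiniteDimensional (adjoin k (Set.range z)) L :=
    Module.finite_of_finrank_pos (Nat.pos_of_ne_zero hz)
  have : Algebra.IsAlgebraic (Algebra.adjoin k (Set.range z)) L :=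
    isAlgebraic_adjoin_iff_top.1 inferInstance
  exact (Algebra.IsAlgebraic.isTranscendenceBasis_of_lift_le_trdeg_of_finite k z
    hx.lift_cardinalMk_le_trdeg).1

theorem not_isAlgebraic_adjoin_image_compl [Finite ι] {x : ι → L} (hx : AlgebraicIndependent k x)
    (z : ι → L) (i : ι) : ¬Algebra.IsAlgebraic (adjoin k (z '' {i}ᶜ)) L := by
  intro halg
  have := isAlgebraic_adjoin_iff_top.1 halg
  have hle := hx.lift_cardinalMk_le_trdeg.trans
    (Cardinal.lift_le.2 (Algebra.IsAlgebraic.trdeg_le_cardinalMk k (z '' {i}ᶜ)))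
  have hcard : Nat.card ι ≤ (z '' {i}ᶜ).ncard := by
    rw [← Nat.card_coe_set_eq]
    have h := Cardinal.toNat_le_toNat hle
      (Cardinal.lift_lt_aleph0.2 (Cardinal.lt_aleph0_of_finite _))
    rwa [Cardinal.toNat_lift, Cardinal.toNat_lift] at h
  have hlt : ({i}ᶜ : Set ι).ncard < Nat.card ι := Set.ncard_lt_card (by simp)
  exact (hcard.trans (Set.ncard_image_le (Set.toFinite _))).not_gt hlt

theorem map_mem_adjoin_image {τ : L →+* L} {τ₀ : k →+* k}
    (hτ : ∀ c, τ (algebraMap k L c) = algebraMap k L (τ₀ c)) {S : Set L} {z : L}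
    (hz : z ∈ adjoin k S) : τ z ∈ adjoin k (τ '' S) := by
  induction hz using adjoin_induction with
  | mem z hz => exact subset_adjoin k _ (Set.mem_image_of_mem τ hz)
  | algebraMap c => exact hτ c ▸ IntermediateField.algebraMap_mem _ _
  | add y z _ _ hy hz => exact map_add τ y z ▸ add_mem hy hz
  | mul y z _ _ hy hz => exact map_mul τ y z ▸ mul_mem hy hz
  | inv z _ hz => exact map_inv₀ τ z ▸ inv_mem hz

theorem degOverAdjoin_comp {e : L ≃+* L} {e₀ : k ≃+* k}
    (he : ∀ c, e (algebraMap k L c) = algebraMap k L (e₀ c)) (z : ι → L) :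
    degOverAdjoin k (e ∘ z) = degOverAdjoin k z := by
  have he' : ∀ c, e.symm (algebraMap k L c) = algebraMap k L (e₀.symm c) := fun c ↦ by
    rw [RingEquiv.symm_apply_eq, he, RingEquiv.apply_symm_apply]
  have hmem : ∀ u, u ∈ adjoin k (Set.range z) ↔ e u ∈ adjoin k (Set.range (e ∘ z)) := fun u ↦ by
    have hsymm : e.symm '' Set.range (e ∘ z) = Set.range z := by
      rw [← Set.range_comp]
      exact congrArg Set.range (funext fun i ↦ e.symm_apply_apply (z i))
    constructor
    · intro hu
      rw [Set.range_comp]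
      exact map_mem_adjoin_image (τ := e.toRingHom) (τ₀ := e₀.toRingHom) he hu
    · intro hu
      have h := map_mem_adjoin_image (τ := e.symm.toRingHom) (τ₀ := e₀.symm.toRingHom) he' hu
      have h' : e.symm (e u) ∈ adjoin k (e.symm '' Set.range (e ∘ z)) := h
      rwa [hsymm, e.symm_apply_apply] at h'
  exact (Algebra.finrank_eq_of_equiv_equiv (e.restrict _ _ hmem) e rfl).symm

theorem degOverAdjoin_comp_equiv {ι' : Type*} (s : ι' ≃ ι) (z : ι → L) :
    degOverAdjoin k (z ∘ s) = degOverAdjoin k z := by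
  rw [degOverAdjoin, s.surjective.range_comp, degOverAdjoin]

end DegreeOverAdjoin

section Expansion

theorem apply_eq_sum_piecewise {ι α M : Type*} [Fintype ι] [DecidableEq ι] [AddCommMonoid M]
    (f : (ι → α) → M) {x y w : ι → α}
    (hf : ∀ z : ι → α, (∀ j, z j = x j ∨ z j = y j ∨ z j = w j) → ∀ i,
      f (Function.update z i (w i)) = f (Function.update z i (x i)) +
        f (Function.update z i (y i))) :
    f w = ∑ T : Finset ι, f (T.piecewise y x) := by
  suffices h : ∀ S : Finset ι,
      f w = ∑ T ∈ S.powerset, f (S.piecewise (T.piecewise y x) w) by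
    simpa only [Finset.powerset_univ, Finset.piecewise_univ] using h Finset.univ
  intro S
  induction S using Finset.induction with
  | empty => simp
  | insert i S hi ih =>
    rw [ih, Finset.sum_powerset_insert hi, ← Finset.sum_add_distrib]
    refine Finset.sum_congr rfl fun T hT ↦ ?_
    have hiT : i ∉ T := fun h ↦ hi (Finset.mem_powerset.1 hT h)
    have hstep := hf (S.piecewise (T.piecewise y x) w) (fun j ↦ by
      simp only [Finset.piecewise]
      split_ifs <;> simp) i
    rw [Function.update_eq_self_iff.2 (Finset.piecewise_eq_of_notMem _ _ _ hi).symm] at hstep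
    rw [hstep, Finset.piecewise_insert, Finset.piecewise_insert, Finset.piecewise_insert,
      Finset.piecewise_eq_of_notMem _ _ _ hiT, Function.update_self,
      S.piecewise_congr (fun j hj ↦ Function.update_of_ne (ne_of_mem_of_not_mem hj hi) _ _)
        fun _ _ ↦ rfl]

end Expansion

section FixedPoints

theorem sum_eq_sum_fixedPoints {p : ℕ} [Fact p.Prime] {G α R : Type*} [Group G] [MulAction G α]
    [Fintype α] [DecidablePred (· ∈ MulAction.fixedPoints G α)] [Semiring R] [CharP R p]
    (hG : IsPGroup p G) (f : α → R) (hf : ∀ (g : G) a, f (g • a) = f a) :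
    ∑ a, f a = ∑ a with a ∈ MulAction.fixedPoints G α, f a := by
  classical
  rw [← Finset.sum_fiberwise_of_maps_to (t := Finset.univ.image f)
      fun a _ ↦ Finset.mem_image_of_mem f (Finset.mem_univ a),
    ← Finset.sum_fiberwise_of_maps_to (s := Finset.univ.filter _) (t := Finset.univ.image f)
      fun a _ ↦ Finset.mem_image_of_mem f (Finset.mem_univ a)]
  refine Finset.sum_congr rfl fun c _ ↦ ?_
  let X : SubMulAction G α := ⟨{a | f a = c}, fun g {a} ha ↦ (hf g a).trans ha⟩
  have hX : Nat.card X = (Finset.univ.filter (f · = c)).card := by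
    rw [Nat.card_eq_fintype_card]
    exact Fintype.card_subtype _
  have hfix : Nat.card (MulAction.fixedPoints G X) =
      ((Finset.univ.filter (· ∈ MulAction.fixedPoints G α)).filter (f · = c)).card := by
    rw [Finset.filter_comm, Finset.filter_filter, ← Fintype.card_subtype,
      ← Nat.card_eq_fintype_card]
    exact Nat.card_congr <| (Equiv.subtypeEquivRight fun a ↦ by
      simp only [MulAction.mem_fixedPoints, Subtype.ext_iff, SubMulAction.val_smul]).trans
        (Equiv.subtypeSubtypeEquivSubtypeInter (f · = c) (· ∈ MulAction.fixedPoints G α))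
  have hconst : ∀ s : Finset α, ∑ a ∈ s with f a = c, f a = (s.filter (f · = c)).card • c :=
    fun s ↦ Finset.sum_eq_card_nsmul fun a ha ↦ (Finset.mem_filter.1 ha).2
  have hmod : (Nat.card X : R) = Nat.card (MulAction.fixedPoints G X) :=
    CharP.natCast_eq_natCast' R p (hG.card_modEq_card_fixedPoints X)
  rw [hconst, hconst, ← hX, ← hfix, nsmul_eq_mul, nsmul_eq_mul, hmod]

open scoped Pointwise in
theorem mem_fixedPoints_finset_iff {G : Type*} [Group G] [Fintype G] [DecidableEq G]
    {S : Finset G} : S ∈ MulAction.fixedPoints G (Finset G) ↔ S = ∅ ∨ S = Finset.univ := by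
  refine ⟨fun hS ↦ ?_, ?_⟩
  · refine S.eq_empty_or_nonempty.imp_right fun ⟨h, hh⟩ ↦ Finset.eq_univ_iff_forall.2 fun g ↦ ?_
    rw [← hS (g * h⁻¹), Finset.mem_smul_finset]
    exact ⟨h, hh, by simp⟩
  · rintro (rfl | rfl) g
    · exact Finset.smul_finset_empty g
    · exact Finset.smul_finset_univ

open scoped Pointwise in
theorem sum_finset_eq_add_of_isPGroup {p : ℕ} [Fact p.Prime] {G R : Type*} [Group G] [Fintype G]
    [DecidableEq G] [Semiring R] [CharP R p] (hG : IsPGroup p G) (f : Finset G → R)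
    (hf : ∀ (g : G) S, f (g • S) = f S) : ∑ S, f S = f ∅ + f Finset.univ := by
  classical
  rw [sum_eq_sum_fixedPoints hG f hf]
  simp only [mem_fixedPoints_finset_iff]
  rw [← Finset.sum_pair Finset.univ_nonempty.ne_empty.symm]
  congr 1
  ext; simp

end FixedPoints

section ScalarNorm

open IntermediateField

variable {ι k L : Type*} [Field k] [Field L] [Algebra k L] {τ₀ : k →+* k} {τ : L →+* L}

theorem map_mem_adjoin_of_mul_map_mem (hτ : ∀ c, τ (algebraMap k L c) = algebraMap k L (τ₀ c))
    {S : Set L} (hS : ∀ z ∈ S, ∃ c : k, z * τ z = algebraMap k L c) {z : L} (hz : z ∈ adjoin k S) :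
    τ z ∈ adjoin k S := by
  have hle : adjoin k (τ '' S) ≤ adjoin k S := by
    rw [adjoin_le_iff]
    rintro _ ⟨z, hz, rfl⟩
    obtain rfl | hz0 := eq_or_ne z 0
    · rw [SetLike.mem_coe, map_zero]
      exact zero_mem _
    · obtain ⟨c, hc⟩ := hS z hz
      rw [SetLike.mem_coe, eq_div_of_mul_eq hz0 ((mul_comm _ _).trans hc)]
      exact div_mem (IntermediateField.algebraMap_mem _ c) (subset_adjoin k S hz)
  exact hle (map_mem_adjoin_image hτ hz)

theorem degOverAdjoin_update_div_zmod_two [Finite ι] [DecidableEq ι] {x : ι → L}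
    (hx : AlgebraicIndependent k x) (hτ : ∀ c, τ (algebraMap k L c) = algebraMap k L (τ₀ c))
    {z : ι → L} (hz : ∀ j, ∃ c : k, z j * τ (z j) = algebraMap k L c) (i : ι) {u v : L} {a b : k}
    (hu : u * τ u = algebraMap k L a) (hv : v * τ v = algebraMap k L b) (ha : a ≠ 0)
    (hb : b ≠ 0) : (degOverAdjoin k (Function.update z i (u / v)) : ZMod 2) =
      degOverAdjoin k (Function.update z i u) + degOverAdjoin k (Function.update z i v) := by
  have hmem : ∀ c ∈ adjoin k (z '' {i}ᶜ), τ c ∈ adjoin k (z '' {i}ᶜ) := fun c ↦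
    map_mem_adjoin_of_mul_map_mem hτ (Set.forall_mem_image.2 fun j _ ↦ hz j)
  simp only [degOverAdjoin_update]
  refine finrank_adjoin_div_zmod_two (σ := τ.restrict _ _ hmem)
    (a := algebraMap k _ a) (b := algebraMap k _ b)
    (not_isAlgebraic_adjoin_image_compl hx z i) (fun c ↦ rfl) hu hv ?_ ?_
  · rwa [map_ne_zero]
  · rwa [map_ne_zero]

theorem even_degOverAdjoin [Finite ι] {x : ι → L} (hx : AlgebraicIndependent k x)
    {σ : k →+* ℂ} (hσ : ∀ c, σ (τ₀ c) = star (σ c))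
    (hτ : ∀ c, τ (algebraMap k L c) = algebraMap k L (τ₀ c)) (hττ : ∀ z, τ (τ z) = z) {u : L}
    (hu : u * τ u = -1) {w : ι → L} (hw : ∀ i, w i * τ (w i) = 1) :
    Even (degOverAdjoin k w) := by
  by_cases h0 : degOverAdjoin k w = 0
  · exact h0 ▸ Even.zero
  have hind := algebraicIndependent_of_degOverAdjoin_ne_zero hx h0
  have hmem : ∀ c ∈ adjoin k (Set.range w), τ c ∈ adjoin k (Set.range w) := fun c ↦
    map_mem_adjoin_of_mul_map_mem hτ
      (Set.forall_mem_range.2 fun i ↦ ⟨1, (hw i).trans (map_one _).symm⟩)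
  let J : L →ₛₗ[τ.restrict _ _ hmem] L :=
    { toFun := fun z ↦ u * τ z
      map_add' := fun y z ↦ by rw [map_add, mul_add]
      map_smul' := fun c z ↦ by
        rw [Algebra.smul_def, map_mul, mul_left_comm]
        rfl }
  refine even_finrank_of_semilinear_apply_apply_eq_neg J (fun z ↦ ?_) fun c hc ↦
    mul_map_ne_neg_one_of_mem_adjoin hσ hτ hw hind c.2 (congrArg Subtype.val hc)
  change u * τ (u * τ z) = -z
  rw [map_mul, hττ, ← mul_assoc, hu, neg_one_mul]

open scoped Pointwise in
theorem piecewise_smul_comp_mulLeft {H α : Type*} [Group H] [DecidableEq H] [SMul H α]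
    {x y : H → α} (hx : ∀ g h, g • x h = x (g * h)) (hy : ∀ g h, g • y h = y (g * h)) (g : H)
    (T : Finset H) :
    (g • T).piecewise y x ∘ Equiv.mulLeft g = (g • ·) ∘ T.piecewise y x := by
  ext h
  simp only [Function.comp_apply, Equiv.coe_mulLeft, Finset.piecewise, ← smul_eq_mul,
    Finset.smul_mem_smul_finset_iff]
  split_ifs
  · exact (hy g h).symm
  · exact (hx g h).symm

open scoped Pointwise in
theorem degOverAdjoin_piecewise_smul {H : Type*} [Group H] [DecidableEq H]
    [MulSemiringAction H k] [MulSemiringAction H L]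
    (hH : ∀ (g : H) (c : k), g • algebraMap k L c = algebraMap k L (g • c)) {x y : H → L}
    (hx : ∀ g h, g • x h = x (g * h)) (hy : ∀ g h, g • y h = y (g * h)) (g : H) (T : Finset H) :
    degOverAdjoin k ((g • T).piecewise y x) = degOverAdjoin k (T.piecewise y x) := by
  rw [← degOverAdjoin_comp_equiv (Equiv.mulLeft g), piecewise_smul_comp_mulLeft hx hy]
  exact degOverAdjoin_comp (e := MulSemiringAction.toRingEquiv H L g)
    (e₀ := MulSemiringAction.toRingEquiv H k g) (hH g) _

theorem algebraicIndependent_of_mul_map_eq_neg_one {H : Type*} [Group H] [Finite H]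
    (h2 : IsPGroup 2 H) [MulSemiringAction H k] [MulSemiringAction H L]
    (hH : ∀ (g : H) (c : k), g • algebraMap k L c = algebraMap k L (g • c))
    {σ : k →+* ℂ} (hσ : ∀ c, σ (τ₀ c) = star (σ c))
    (hτ : ∀ c, τ (algebraMap k L c) = algebraMap k L (τ₀ c)) (hττ : ∀ z, τ (τ z) = z)
    {x y : H → L} (hHx : ∀ g h, g • x h = x (g * h)) (hHy : ∀ g h, g • y h = y (g * h))
    (hτx : ∀ h, x h * τ (x h) = -1) (hτy : ∀ h, y h * τ (y h) = -1)
    (hx : AlgebraicIndependent k x) (hxtop : adjoin k (Set.range x) = ⊤) :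
    AlgebraicIndependent k y := by
  classical
  have := Fintype.ofFinite H
  set w := x / y
  have hτw : ∀ h, w h * τ (w h) = 1 := fun h ↦ by
    rw [show w h = x h / y h from rfl, map_div₀, div_mul_div_comm, hτx, hτy,
      div_self (neg_ne_zero.2 one_ne_zero)]
  have hneg : (-1 : L) = algebraMap k L (-1) := by rw [map_neg, map_one]
  have hexpand := apply_eq_sum_piecewise (fun z ↦ (degOverAdjoin k z : ZMod 2)) (x := x) (y := y)
    (w := w) fun z hz i ↦ degOverAdjoin_update_div_zmod_two hx hτ (fun j ↦ by
      obtain h | h | h := hz j <;> rw [h]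
      · exact ⟨-1, (hτx j).trans hneg⟩
      · exact ⟨-1, (hτy j).trans hneg⟩
      · exact ⟨1, (hτw j).trans (map_one _).symm⟩) i ((hτx i).trans hneg) ((hτy i).trans hneg)
      (neg_ne_zero.2 one_ne_zero) (neg_ne_zero.2 one_ne_zero)
  have hzero : (degOverAdjoin k w : ZMod 2) = 0 :=
    (ZMod.natCast_eq_zero_iff_even).2 (even_degOverAdjoin hx hσ hτ hττ (hτx 1) hτw)
  rw [sum_finset_eq_add_of_isPGroup h2 (fun T : Finset H ↦
    (degOverAdjoin k (T.piecewise y x) : ZMod 2)) fun g T ↦ by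
      rw [degOverAdjoin_piecewise_smul hH hHx hHy], hzero] at hexpand
  rw [Finset.piecewise_empty, Finset.piecewise_univ, degOverAdjoin_eq_one hxtop] at hexpand
  refine algebraicIndependent_of_degOverAdjoin_ne_zero hx fun hy ↦ ?_
  rw [hy] at hexpand
  simp at hexpand

end ScalarNorm

section SemilinearLift

open IntermediateField

variable {ι k L M : Type*} [Field k] [Field L] [Algebra k L] [Field M] {x : ι → L}

theorem ringHom_ext_of_adjoin_eq_top (hxtop : adjoin k (Set.range x) = ⊤) {f g : L →+* M}
    (hk : ∀ c, f (algebraMap k L c) = g (algebraMap k L c)) (hx : ∀ i, f (x i) = g (x i)) :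
    f = g := by
  refine RingHom.ext fun z ↦ ?_
  have hz : z ∈ adjoin k (Set.range x) := hxtop ▸ mem_top
  induction hz using adjoin_induction with
  | mem z hz => obtain ⟨i, rfl⟩ := hz; exact hx i
  | algebraMap c => exact hk c
  | add y z _ _ hy hz => rw [map_add, map_add, hy, hz]
  | mul y z _ _ hy hz => rw [map_mul, map_mul, hy, hz]
  | inv z _ hz => rw [map_inv₀, map_inv₀, hz]

theorem injective_eval₂Hom_comp [Algebra k M] (σ : k →+* k) {y : ι → M}
    (hy : AlgebraicIndependent k y) :
    Function.Injective (MvPolynomial.eval₂Hom ((algebraMap k M).comp σ) y) := by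
  have h := (algebraicIndependent_iff_injective_aeval.1 hy).comp
    (MvPolynomial.map_injective σ σ.injective)
  refine Eq.mp (congrArg _ (funext fun p ↦ ?_)) h
  rw [Function.comp_apply, MvPolynomial.aeval_def, MvPolynomial.eval₂_map]
  rfl

theorem exists_semilinear_ringHom [Algebra k M] (hx : AlgebraicIndependent k x)
    (hxtop : adjoin k (Set.range x) = ⊤) (σ : k →+* k) {y : ι → M}
    (hy : AlgebraicIndependent k y) :
    ∃ φ : L →+* M, (∀ c, φ (algebraMap k L c) = algebraMap k M (σ c)) ∧ ∀ i, φ (x i) = y i := by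
  let e : FractionRing (MvPolynomial ι k) ≃ₐ[k] L :=
    hx.aevalEquivField.trans ((equivOfEq hxtop).trans topEquiv)
  let f : FractionRing (MvPolynomial ι k) →+* M :=
    IsFractionRing.lift (injective_eval₂Hom_comp σ hy)
  have he (i : ι) : e (algebraMap _ _ (MvPolynomial.X i)) = x i :=
    (hx.aevalEquivField_algebraMap_apply_coe _).trans (MvPolynomial.aeval_X x i)
  refine ⟨f.comp (e.symm : L →+* FractionRing (MvPolynomial ι k)), fun c ↦ ?_, fun i ↦ ?_⟩
  · change f (e.symm (algebraMap k L c)) = _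
    rw [e.symm.commutes, IsScalarTower.algebraMap_apply k (MvPolynomial ι k)]
    exact (IsFractionRing.lift_algebraMap _ _).trans (MvPolynomial.eval₂Hom_C _ _ _)
  · change f (e.symm (x i)) = _
    rw [e.symm_apply_eq.2 (he i).symm]
    exact (IsFractionRing.lift_algebraMap _ _).trans (MvPolynomial.eval₂Hom_X' _ _ _)

end SemilinearLift

section NegInvAction

open IntermediateField

variable {k L Γ : Type*} [Field k] [Field L] [Algebra k L] [Group Γ] {H : Subgroup Γ} {τ : Γ}

theorem adjoin_range_mul_left (hH : ∀ γ, γ ∈ H ↔ γ * τ ∉ H) {X : Γ → L}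
    (hX : ∀ γ, X (γ * τ) = -(X γ)⁻¹) (γ : Γ) :
    adjoin k (Set.range fun h : H ↦ X (γ * h)) = adjoin k (Set.range X) := by
  refine le_antisymm (adjoin.mono k _ _ (Set.range_comp_subset_range _ X)) ?_
  rw [adjoin_le_iff]
  rintro _ ⟨δ, rfl⟩
  have hmem {ε : Γ} (hε : γ⁻¹ * ε ∈ H) : X ε ∈ adjoin k (Set.range fun h : H ↦ X (γ * h)) :=
    subset_adjoin k _ ⟨⟨_, hε⟩, congrArg X (mul_inv_cancel_left γ ε)⟩
  by_cases hδ : γ⁻¹ * δ ∈ H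
  · exact hmem hδ
  · have h := hmem (ε := δ * τ) (by rw [← mul_assoc]; exact not_not.1 (mt (hH _).2 hδ))
    rw [hX] at h
    rw [SetLike.mem_coe, ← inv_inv (X δ), ← neg_neg (X δ)⁻¹, inv_neg]
    exact neg_mem (inv_mem h)

theorem exists_extend_mul_eq_neg_inv (hττ : τ * τ = 1) (hH : ∀ γ, γ ∈ H ↔ γ * τ ∉ H) (x : H → L) :
    ∃ X : Γ → L, (∀ h : H, X h = x h) ∧ ∀ γ, X (γ * τ) = -(X γ)⁻¹ := by
  classical
  have hHτ {γ : Γ} (hγ : γ ∉ H) : γ * τ ∈ H := not_not.1 (mt (hH γ).2 hγ)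
  refine ⟨fun γ ↦ if hγ : γ ∈ H then x ⟨γ, hγ⟩ else -(x ⟨γ * τ, hHτ hγ⟩)⁻¹,
    fun h ↦ dif_pos h.2, fun γ ↦ ?_⟩
  by_cases hγ : γ ∈ H
  · simp only [dif_pos hγ, dif_neg ((hH γ).1 hγ), mul_assoc, hττ, mul_one]
  · simp only [dif_neg hγ, dif_pos (hHτ hγ), inv_neg, inv_inv, neg_neg]

theorem algebraicIndependent_mul_left [Finite H] (hH : ∀ γ, γ ∈ H ↔ γ * τ ∉ H) {X : Γ → L}
    (hX : ∀ γ, X (γ * τ) = -(X γ)⁻¹) (hXH : AlgebraicIndependent k fun h : H ↦ X h)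
    (htop : adjoin k (Set.range fun h : H ↦ X h) = ⊤) (γ : Γ) :
    AlgebraicIndependent k fun h : H ↦ X (γ * h) := by
  refine algebraicIndependent_of_degOverAdjoin_ne_zero hXH ?_
  rw [degOverAdjoin_eq_one]
  · exact one_ne_zero
  · rw [adjoin_range_mul_left hH hX, ← adjoin_range_mul_left hH hX 1]
    simpa only [one_mul] using htop

theorem map_eq_mul_of_mul_eq_neg_inv (hH : ∀ γ, γ ∈ H ↔ γ * τ ∉ H) {X : Γ → L}
    (hX : ∀ γ, X (γ * τ) = -(X γ)⁻¹) {φ : L →+* L} {γ : Γ} (hφ : ∀ h : H, φ (X h) = X (γ * h))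
    (δ : Γ) : φ (X δ) = X (γ * δ) := by
  by_cases hδ : δ ∈ H
  · exact hφ ⟨δ, hδ⟩
  · have h := hφ ⟨δ * τ, not_not.1 (mt (hH δ).2 hδ)⟩
    rw [← mul_assoc, hX, hX, map_neg, map_inv₀] at h
    exact inv_injective (neg_injective h)

theorem exists_semilinear_action_neg_inv [MulSemiringAction Γ k] [Finite H] (hττ : τ * τ = 1)
    (hτ : ∀ γ, γ * τ = τ * γ) (hH : ∀ γ, γ ∈ H ↔ γ * τ ∉ H) {x : H → L}
    (hx : AlgebraicIndependent k x) (hxtop : adjoin k (Set.range x) = ⊤) :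
    ∃ φ : Γ →* (L →+* L), (∀ γ c, φ γ (algebraMap k L c) = algebraMap k L (γ • c)) ∧
      (∀ g h : H, φ g (x h) = x (g * h)) ∧ ∀ h, φ τ (x h) = -(x h)⁻¹ := by
  obtain ⟨X, hXx, hX⟩ := exists_extend_mul_eq_neg_inv hττ hH x
  obtain rfl : (fun h : H ↦ X h) = x := funext hXx
  choose φ hφk hφx using fun γ ↦ exists_semilinear_ringHom hx hxtop
    (MulSemiringAction.toRingHom Γ k γ) (algebraicIndependent_mul_left hH hX hx hxtop γ)
  have hφX (γ δ : Γ) : φ γ (X δ) = X (γ * δ) := map_eq_mul_of_mul_eq_neg_inv hH hX (hφx γ) δ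
  refine ⟨⟨⟨φ, ?_⟩, fun γ δ ↦ ?_⟩, hφk, fun g ↦ hφx g, fun h ↦ ?_⟩
  · exact ringHom_ext_of_adjoin_eq_top hxtop (fun c ↦ (hφk 1 c).trans (congrArg _ (one_smul Γ c)))
      fun h ↦ (hφX 1 h).trans (congrArg X (one_mul (h : Γ)))
  · refine ringHom_ext_of_adjoin_eq_top hxtop (fun c ↦ ?_) fun h ↦ ?_
    · change φ (γ * δ) _ = φ γ (φ δ _)
      rw [hφk, hφk, hφk]
      exact congrArg _ (mul_smul γ δ c)
    · change φ (γ * δ) _ = φ γ (φ δ _)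
      rw [hφX, hφX, hφX, mul_assoc]
  · exact (hφX τ h).trans (hτ h ▸ hX h)

end NegInvAction

section RationalFunctions

open IntermediateField

universe u v

theorem exists_algebraicIndependent_adjoin_eq_top (ι : Type u) (k : Type v) [Field k] :
    ∃ (L : Type max u v) (_ : Field L) (_ : Algebra k L) (x : ι → L),
      AlgebraicIndependent k x ∧ adjoin k (Set.range x) = ⊤ := by
  let e : MvPolynomial ι k →ₐ[k] FractionRing (MvPolynomial ι k) := IsScalarTower.toAlgHom k _ _
  refine ⟨FractionRing (MvPolynomial ι k), inferInstance, inferInstance,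
    fun i ↦ e (MvPolynomial.X i), (MvPolynomial.algebraicIndependent_X ι k).map'
    (IsFractionRing.injective _ _), eq_top_iff.2 fun z _ ↦ ?_⟩
  have he (p : MvPolynomial ι k) : MvPolynomial.aeval (fun i ↦ e (MvPolynomial.X i)) p = e p :=
    DFunLike.congr_fun (MvPolynomial.algHom_ext fun i ↦ MvPolynomial.aeval_X _ i) p
  obtain ⟨p, q, _, rfl⟩ := IsFractionRing.div_surjective (A := MvPolynomial ι k) z
  exact (mem_adjoin_range_iff k _ _).2 ⟨p, q, by rw [he, he]; rfl⟩

end RationalFunctions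

section MatrixRepresentation

theorem descends_top {k K G : Type*} [Field k] [Field K] [Algebra k K] [Group G] {n : ℕ}
    (ρ : G →* GL (Fin n) K) : Descends ρ (⊤ : IntermediateField k K) := by
  let e : K →+* (⊤ : IntermediateField k K) :=
    (IntermediateField.topEquiv (F := k) (E := K)).symm.toAlgHom.toRingHom
  refine ⟨(Units.map e.mapMatrix.toMonoidHom).comp ρ, 1, fun g ↦ ?_⟩
  rw [one_mul, inv_one, mul_one]
  rfl

variable {k K V G : Type*} [Field k] [Field K] [Algebra k K] [AddCommGroup V] [Module K V]
  [Group G] {n : ℕ}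

/-- The matrix form, with respect to the basis `b`, of a linear representation `f`. -/
noncomputable def matrixRep (f : Representation K G V) (b : Module.Basis (Fin n) K V) :
    G →* GL (Fin n) K :=
  ((LinearMap.toMatrixAlgEquiv b : Module.End K V →* Matrix (Fin n) (Fin n) K).comp f).toHomUnits

variable (f : Representation K G V) (b : Module.Basis (Fin n) K V)

theorem matrixRep_mulVec_equivFun (g : G) (v : V) :
    (matrixRep f b g : Matrix (Fin n) (Fin n) K) *ᵥ b.equivFun v = b.equivFun (f g v) :=
  LinearMap.toMatrix_mulVec_repr b b (f g) v

theorem repChar_matrixRep (g : G) : repChar (matrixRep f b) g = LinearMap.trace K V (f g) :=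
  (LinearMap.trace_eq_matrix_trace K b (f g)).symm

theorem isIrreducibleRep_matrixRep (hn : 0 < n)
    (hf : ∀ W : Submodule K V, (∀ g, ∀ v ∈ W, f g v ∈ W) → W = ⊥ ∨ W = ⊤) :
    IsIrreducibleRep (matrixRep f b) := by
  refine ⟨hn, fun W hW ↦ ?_⟩
  have hW' := hf (W.comap b.equivFun.toLinearMap) fun g v hv ↦
    (matrixRep_mulVec_equivFun f b g v ▸ hW g _ hv : b.equivFun (f g v) ∈ W)
  rw [← Submodule.map_comap_eq_of_surjective b.equivFun.surjective W]
  exact hW'.imp (fun h ↦ by rw [h, Submodule.map_bot])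
    (fun h ↦ by rw [h, Submodule.map_top, LinearMap.range_eq_top.2 b.equivFun.surjective])

theorem exists_submodule_of_descends {K₀ : IntermediateField k K}
    (hd : Descends (matrixRep f b) K₀) :
    ∃ W : Submodule K₀ V, Module.finrank K₀ W = n ∧ ∀ g, ∀ v ∈ W, f g v ∈ W := by
  obtain ⟨ρ', M, hM⟩ := hd
  let Φ : (Fin n → K) →ₗ[K] V := b.equivFun.symm.toLinearMap ∘ₗ M.1.mulVecLin
  let Ψ : (Fin n → K₀) →ₗ[K₀] V := Φ.restrictScalars K₀ ∘ₗ (Algebra.linearMap K₀ K).compLeft (Fin n)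
  have hΨ (w : Fin n → K₀) : b.equivFun (Ψ w) = M.1 *ᵥ (algebraMap K₀ K ∘ w) :=
    b.equivFun.apply_symm_apply _
  refine ⟨LinearMap.range Ψ, ?_, ?_⟩
  · rw [LinearMap.finrank_range_of_inj, Module.finrank_fin_fun]
    exact (b.equivFun.symm.injective.comp (Matrix.mulVec_injective_of_isUnit M.isUnit)).comp
      ((algebraMap K₀ K).injective.comp_left)
  · rintro g _ ⟨w, rfl⟩
    refine ⟨(ρ' g).1 *ᵥ w, b.equivFun.injective ?_⟩
    have hρM : (matrixRep f b g).1 * M.1 = M.1 * (ρ' g).1.map (algebraMap K₀ K) :=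
      congrArg Units.val (show matrixRep f b g * M =
        M * Units.map ((algebraMap K₀ K).mapMatrix).toMonoidHom (ρ' g) by
          rw [hM g, inv_mul_cancel_right])
    rw [← matrixRep_mulVec_equivFun, hΨ, hΨ, mulVec_mulVec, hρM, ← mulVec_mulVec]
    exact congrArg _ (funext fun i ↦ RingHom.map_mulVec (algebraMap K₀ K) _ _ i)

end MatrixRepresentation

section DescentOfMultiplication

variable {k K L G : Type*} [Field k] [Field K] [Field L] [Algebra k K] [Algebra K L] [Group G]
  {n : ℕ} {f : Representation K G L} {b : Module.Basis (Fin n) K L} {ζ : L} {g₀ : G}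

theorem isIrreducibleRep_of_adjoin_eq_top (hζ : Algebra.adjoin K {ζ} = ⊤)
    (hg₀ : ∀ v, f g₀ v = ζ * v) : IsIrreducibleRep (matrixRep f b) := by
  refine isIrreducibleRep_matrixRep f b ?_ fun W hW ↦ ?_
  · have := b.index_nonempty
    exact Fin.pos'
  have hmul (c v : L) (hv : v ∈ W) : c * v ∈ W := by
    have hc : c ∈ Algebra.adjoin K {ζ} := hζ ▸ Algebra.mem_top
    induction hc using Algebra.adjoin_induction generalizing v with
    | mem y hy => exact hy ▸ hg₀ v ▸ hW g₀ v hv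
    | algebraMap r => exact Algebra.smul_def r v ▸ W.smul_mem r hv
    | add y z _ _ hy hz => exact add_mul y z v ▸ W.add_mem (hy v hv) (hz v hv)
    | mul y z _ _ hy hz => exact mul_assoc y z v ▸ hy _ (hz v hv)
  refine or_iff_not_imp_left.2 fun hbot ↦ eq_top_iff.2 fun w _ ↦ ?_
  obtain ⟨v, hv, hv0⟩ := W.exists_mem_ne_zero_of_ne_bot hbot
  simpa only [div_mul_cancel₀ w hv0] using hmul (w / v) v hv

theorem exists_apply_eq_mul_of_descends (hg₀ : ∀ v, f g₀ v = ζ * v)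
    (hζ : LinearIndependent K fun j : Fin n ↦ ζ ^ (j : ℕ)) {K₀ : IntermediateField k K}
    (hd : Descends (matrixRep f b) K₀) :
    ∃ v ≠ 0, ∀ g, ∃ y ∈ Algebra.adjoin K₀ {ζ}, f g v = y * v := by
  obtain ⟨W, hWn, hW⟩ := exists_submodule_of_descends f b hd
  have hn : 0 < n := by
    have := b.index_nonempty
    exact Fin.pos'
  obtain ⟨v, hv, hv0⟩ := W.exists_mem_ne_zero_of_ne_bot fun hbot ↦
    hn.ne (by rw [← hWn, hbot, finrank_bot])
  have hpow (j : ℕ) : ζ ^ j * v ∈ W := by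
    induction j with
    | zero => rwa [pow_zero, one_mul]
    | succ j ih => exact pow_succ' ζ j ▸ mul_assoc ζ (ζ ^ j) v ▸ hg₀ (ζ ^ j * v) ▸ hW g₀ _ ih
  let w (j : Fin n) : W := ⟨ζ ^ (j : ℕ) * v, hpow j⟩
  have hw : LinearIndependent K₀ w := by
    refine .of_comp W.subtype ?_
    exact LinearIndependent.restrict_scalars' K₀ <|
      hζ.map' (LinearMap.mulRight K v) (LinearMap.ker_eq_bot.2 (mul_left_injective₀ hv0))
  have hspan : Submodule.span K₀ (Set.range w) = ⊤ :=
    have := Fin.pos_iff_nonempty.1 hn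
    hw.span_eq_top_of_card_eq_finrank (by rw [Fintype.card_fin, hWn])
  refine ⟨v, hv0, fun g ↦ ?_⟩
  have hg : (⟨f g v, hW g v hv⟩ : W) ∈ Submodule.span K₀ (Set.range w) := hspan ▸ trivial
  have hle : (Submodule.span K₀ (Set.range w)).map W.subtype ≤
      (Subalgebra.toSubmodule (Algebra.adjoin K₀ {ζ})).map (LinearMap.mulRight K₀ v) := by
    rw [Submodule.map_span_le]
    rintro _ ⟨j, rfl⟩
    exact ⟨ζ ^ (j : ℕ), pow_mem (Algebra.self_mem_adjoin_singleton K₀ ζ) j, rfl⟩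
  obtain ⟨y, hy, hyv⟩ := hle ⟨_, hg, rfl⟩
  exact ⟨y, hy, hyv.symm⟩

end DescentOfMultiplication

theorem isPGroup_two_quaternionGroup (n : ℕ) : IsPGroup 2 (QuaternionGroup (2 ^ n)) := by
  refine .of_card (n := n + 2) ?_
  rw [Nat.card_eq_fintype_card, QuaternionGroup.card, pow_add, mul_comm]
  norm_num

theorem trace_eq_zero_of_mul_eq_neg_mul {R M : Type*} [CommRing R] [NoZeroDivisors R] [CharZero R]
    [AddCommGroup M] [Module R M] {S J : Module.End R M} (hJ : J * J = -1)
    (hSJ : S * J = -(J * S)) : LinearMap.trace R M S = 0 := by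
  refine self_eq_neg.1 ?_
  calc
    LinearMap.trace R M S = LinearMap.trace R M (-(J * (J * S))) := by
      rw [← mul_assoc, hJ, neg_one_mul, neg_neg]
    _ = LinearMap.trace R M (J * (S * J)) := by rw [hSJ, mul_neg]
    _ = LinearMap.trace R M (S * J * J) := LinearMap.trace_mul_comm ..
    _ = -LinearMap.trace R M S := by rw [mul_assoc, hJ, mul_neg_one, map_neg]

theorem linearIndependent_pow_of_adjoin_eq_top {K L : Type*} [Field K] [Field L] [Algebra K L]
    {n : ℕ} (b : Module.Basis (Fin n) K L) {ζ : L} (htop : Algebra.adjoin K {ζ} = ⊤) :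
    LinearIndependent K fun j : Fin n ↦ ζ ^ (j : ℕ) := by
  have := Module.Finite.of_basis b
  have hn : n = (minpoly K ζ).natDegree := by
    rw [← Fintype.card_fin n, ← Module.finrank_eq_card_basis b,
      (PowerBasis.ofAdjoinEqTop (Algebra.IsIntegral.isIntegral ζ) htop).finrank]
    rfl
  subst hn
  exact linearIndependent_pow ζ

section QuaternionRepresentation

open QuaternionGroup

variable {K L : Type*} [Field K] [Field L] [Algebra K L] {m : ℕ} [NeZero m] {ζ x : L}
  {t : L →ₐ[K] L}

/-- The representation of the generalized quaternion group of order `4m` on `L` in which `a 1` acts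
as multiplication by `ζ` and `xa 0` as the semilinear map `v ↦ x * t v`. -/
def quaternionRep (hζ : ζ ^ m = -1) (htt : ∀ v, t (t v) = v) (htζ : t ζ = ζ⁻¹)
    (hx : x * t x = -1) : Representation K (QuaternionGroup m) L :=
  let z : AddChar (ZMod (2 * m)) L :=
    AddChar.zmodChar (2 * m) (by rw [mul_comm, pow_mul, hζ, neg_one_sq])
  have hz (i) : t (z i) = z (-i) := by
    rw [AddChar.map_neg_eq_inv, AddChar.zmodChar_apply, map_pow, htζ, inv_pow]
  have hzm : z m = -1 := by rw [AddChar.zmodChar_apply', hζ]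
  { toFun := fun
      | a i => LinearMap.mulLeft K (z i)
      | xa i => LinearMap.mulLeft K x ∘ₗ t.toLinearMap ∘ₗ LinearMap.mulLeft K (z i)
    map_one' := LinearMap.ext fun v ↦ by
      change z 0 * v = v
      rw [AddChar.map_zero_eq_one, one_mul]
    map_mul' := by
      rintro (i | i) (j | j) <;> refine LinearMap.ext fun v ↦ ?_
      · change z (i + j) * v = z i * (z j * v)
        rw [AddChar.map_add_eq_mul, mul_assoc]
      · change x * t (z (j - i) * v) = z i * (x * t (z j * v))
        rw [sub_eq_add_neg, AddChar.map_add_eq_mul, map_mul, map_mul, map_mul, hz (-i), neg_neg]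
        ring
      · change x * t (z (i + j) * v) = x * t (z i * (z j * v))
        rw [AddChar.map_add_eq_mul, mul_assoc]
      · change z (m + j - i) * v = x * t (z i * (x * t (z j * v)))
        rw [sub_eq_add_neg, AddChar.map_add_eq_mul, AddChar.map_add_eq_mul, hzm]
        simp only [map_mul, hz, neg_neg, htt]
        linear_combination (-z (-i) * z j * v) * hx }

variable (hζ : ζ ^ m = -1) (htt : ∀ v, t (t v) = v) (htζ : t ζ = ζ⁻¹) (hx : x * t x = -1)

theorem quaternionRep_a_natCast (i : ℕ) (v : L) :
    quaternionRep hζ htt htζ hx (a i) v = ζ ^ i * v :=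
  congrArg (· * v) (AddChar.zmodChar_apply' ..)

theorem quaternionRep_xa_natCast (i : ℕ) (v : L) :
    quaternionRep hζ htt htζ hx (xa i) v = x * t (ζ ^ i * v) :=
  congrArg (fun z ↦ x * t (z * v)) (AddChar.zmodChar_apply' ..)

theorem trace_quaternionRep_a (i : ℕ) :
    LinearMap.trace K L (quaternionRep hζ htt htζ hx (a i)) = Algebra.trace K L (ζ ^ i) :=
  congrArg (LinearMap.trace K L) (LinearMap.ext (quaternionRep_a_natCast hζ htt htζ hx i))

theorem trace_quaternionRep_xa [CharZero K] (hm : Even m) (i : ℕ) :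
    LinearMap.trace K L (quaternionRep hζ htt htζ hx (xa i)) = 0 := by
  obtain ⟨j, hj⟩ := hm
  have hI : ζ ^ j * ζ ^ j = -1 := by rw [← pow_add, ← hj, hζ]
  have htI : t (ζ ^ j) = -ζ ^ j := by
    rw [map_pow, htζ, inv_pow]
    exact inv_eq_of_mul_eq_one_right (by rw [mul_neg, hI, neg_neg])
  refine trace_eq_zero_of_mul_eq_neg_mul (J := LinearMap.mulLeft K (ζ ^ j))
    (LinearMap.ext fun v ↦ ?_) (LinearMap.ext fun v ↦ ?_)
  · change ζ ^ j * (ζ ^ j * v) = -v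
    rw [← mul_assoc, hI, neg_one_mul]
  · rw [Module.End.mul_apply, LinearMap.neg_apply, Module.End.mul_apply, LinearMap.mulLeft_apply,
      LinearMap.mulLeft_apply, quaternionRep_xa_natCast, quaternionRep_xa_natCast]
    simp only [map_mul, htI]
    ring

theorem trace_quaternionRep_mem_range [CharZero K] {R : Type*} [CommRing R] [Algebra R K]
    (hm : Even m) (htr : ∀ i : ℕ, Algebra.trace K L (ζ ^ i) ∈ (algebraMap R K).range)
    (g : QuaternionGroup m) :
    LinearMap.trace K L (quaternionRep hζ htt htζ hx g) ∈ (algebraMap R K).range := by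
  obtain i | i := g <;> obtain ⟨i, rfl⟩ := ZMod.natCast_zmod_surjective i
  · exact trace_quaternionRep_a hζ htt htζ hx i ▸ htr i
  · exact trace_quaternionRep_xa hζ htt htζ hx hm i ▸ zero_mem _

theorem isIrreducibleRep_matrixRep_quaternionRep {n : ℕ} (b : Module.Basis (Fin n) K L)
    (htop : Algebra.adjoin K {ζ} = ⊤) :
    IsIrreducibleRep (matrixRep (quaternionRep hζ htt htζ hx) b) :=
  isIrreducibleRep_of_adjoin_eq_top htop fun v ↦ by
    rw [quaternionRep_a_natCast hζ htt htζ hx 1 v, pow_one]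

theorem exists_mul_map_eq_neg_one_of_descends {k : Type*} [Field k] [Algebra k K]
    {K₀ : IntermediateField k K} {n : ℕ} {b : Module.Basis (Fin n) K L}
    (htop : Algebra.adjoin K {ζ} = ⊤)
    (hd : Descends (matrixRep (quaternionRep hζ htt htζ hx) b) K₀) :
    ∃ y ∈ Algebra.adjoin K₀ {ζ}, y * t y = -1 := by
  obtain ⟨v, hv0, hv⟩ := exists_apply_eq_mul_of_descends (g₀ := a (1 : ℕ))
    (fun v ↦ by rw [quaternionRep_a_natCast, pow_one])
    (linearIndependent_pow_of_adjoin_eq_top b htop) hd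
  obtain ⟨y, hy, hyv⟩ := hv (xa (0 : ℕ))
  rw [quaternionRep_xa_natCast, pow_zero, one_mul] at hyv
  have htyv : t x * v = t y * t v := by rw [← map_mul, ← hyv, map_mul, htt]
  have htv0 : t v ≠ 0 := (map_ne_zero_iff t t.injective).2 hv0
  refine ⟨y, hy, mul_right_cancel₀ (mul_ne_zero hv0 htv0) ?_⟩
  linear_combination (-t y * t v) * hyv - x * t v * htyv + (v * t v) * hx

end QuaternionRepresentation

section GaloisGroup

open IntermediateField

variable (Γ K : Type*) {L : Type*} [Group Γ] [Field K] [Field L] [Algebra K L]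
  [MulSemiringAction Γ L] [IsGaloisGroup Γ K L]

theorem algebraMap_trace_eq_sum_smul [Fintype Γ] (z : L) :
    algebraMap K L (Algebra.trace K L z) = ∑ γ : Γ, γ • z := by
  have := IsGaloisGroup.isGalois Γ K L
  have := IsGaloisGroup.finiteDimensional Γ K L
  rw [trace_eq_sum_automorphisms]
  exact (Equiv.sum_comp (IsGaloisGroup.mulEquivAlgEquiv Γ K L).toEquiv fun s ↦ s z).symm

variable [Finite Γ]

theorem adjoin_singleton_eq_top_of_injective {z : L} (hz : Function.Injective fun γ : Γ ↦ γ • z) :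
    Algebra.adjoin K {z} = ⊤ := by
  have := IsGaloisGroup.isGalois Γ K L
  have := IsGaloisGroup.finiteDimensional Γ K L
  have htop : K⟮z⟯ = ⊤ := by
    rw [Field.primitive_element_iff_algHom_eq_of_eval' K L (Normal.splits inferInstance)]
    intro φ ψ h
    obtain ⟨φ, rfl⟩ := (algEquivEquivAlgHom K L).surjective φ
    obtain ⟨ψ, rfl⟩ := (algEquivEquivAlgHom K L).surjective ψ
    obtain ⟨γ, rfl⟩ := (IsGaloisGroup.mulEquivAlgEquiv Γ K L).surjective φ
    obtain ⟨δ, rfl⟩ := (IsGaloisGroup.mulEquivAlgEquiv Γ K L).surjective ψ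
    rw [hz h]
  rw [← adjoin_simple_toSubalgebra_of_isAlgebraic (Algebra.IsAlgebraic.isAlgebraic z), htop,
    top_toSubalgebra]

variable {F k : Type*} [Field F] [Field k] [Algebra F k] [Algebra F K] [Algebra F L] [Algebra k L]
  [IsScalarTower F K L] [IsScalarTower F k L] [MulSemiringAction Γ k] [IsGaloisGroup Γ F k]

theorem trace_algebraMap_of_smul_algebraMap
    (hΓ : ∀ (γ : Γ) (c : k), γ • algebraMap k L c = algebraMap k L (γ • c)) (c : k) :
    Algebra.trace K L (algebraMap k L c) = algebraMap F K (Algebra.trace F k c) := by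
  have := Fintype.ofFinite Γ
  apply (algebraMap K L).injective
  calc
    algebraMap K L (Algebra.trace K L (algebraMap k L c)) = ∑ γ : Γ, algebraMap k L (γ • c) := by
      simp only [algebraMap_trace_eq_sum_smul Γ, hΓ]
    _ = algebraMap k L (algebraMap F k (Algebra.trace F k c)) := by
      rw [algebraMap_trace_eq_sum_smul Γ, map_sum]
    _ = algebraMap K L (algebraMap F K (Algebra.trace F k c)) := by
      rw [← IsScalarTower.algebraMap_apply, ← IsScalarTower.algebraMap_apply]

end GaloisGroup

section TranscendenceDegree

universe v w

theorem natCast_le_trdeg_iff_exists_finset {k A : Type*} [Field k] [Field A] [Algebra k A]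
    {n : ℕ} : (n : Cardinal) ≤ Algebra.trdeg k A ↔
      ∃ s : Finset A, AlgebraicIndependent k (fun x : {y : A // y ∈ s} ↦ (x : A)) ∧ s.card = n := by
  constructor
  · intro hn
    obtain ⟨t, ht⟩ := exists_isTranscendenceBasis k A
    obtain ⟨s, hst, hsn⟩ := Cardinal.le_mk_iff_exists_subset.1 (ht.cardinalMk_eq_trdeg ▸ hn)
    obtain ⟨s, rfl, hcard⟩ := Cardinal.mk_set_eq_nat_iff_finset.1 hsn
    exact ⟨s, ht.1.mono hst, hcard⟩
  · rintro ⟨s, hs, rfl⟩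
    exact Cardinal.mk_coe_finset ▸ hs.cardinalMk_le_trdeg

variable {k K : Type*} [Field k] [Field K] [Algebra k K] {K₀ : IntermediateField k K} {d : ℕ}

theorem trdegLT_iff : TrdegLT K₀ d ↔ Algebra.trdeg k K₀ < d := by
  rw [← not_le, natCast_le_trdeg_iff_exists_finset]
  refine ⟨fun h ⟨s, hs, hsd⟩ ↦ (h s hs).ne hsd, fun h s hs ↦ not_le.1 fun hd ↦ h ?_⟩
  rw [← natCast_le_trdeg_iff_exists_finset]
  exact (Nat.cast_le.2 hd).trans (natCast_le_trdeg_iff_exists_finset.2 ⟨s, hs, rfl⟩)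

theorem trdegLE_iff : TrdegLE K₀ d ↔ Algebra.trdeg k K₀ ≤ d := by
  rw [← Order.lt_succ_iff, Cardinal.succ_natCast, ← Nat.cast_succ, ← trdegLT_iff]
  exact forall₂_congr fun _ _ ↦ Nat.lt_succ_iff.symm

theorem trdegEq_iff : TrdegEq K₀ d ↔ Algebra.trdeg k K₀ = d :=
  (and_congr trdegLE_iff natCast_le_trdeg_iff_exists_finset.symm).trans le_antisymm_iff.symm

variable {F k ι : Type*} {K : Type v} {L : Type w} [Field F] [Field k] [Field K] [Field L]
  [Algebra F K] [Algebra K L] [Algebra F L] [IsScalarTower F K L]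

theorem lift_trdeg_eq_lift_trdeg_of_isAlgebraic [Algebra.IsAlgebraic K L] :
    Cardinal.lift.{w} (Algebra.trdeg F K) = Cardinal.lift.{v} (Algebra.trdeg F L) := by
  rw [← lift_trdeg_add_eq F K L, trdeg_eq_zero (R := K), Cardinal.lift_zero, add_zero]

theorem trdeg_eq_trdeg_of_isAlgebraic [Algebra.IsAlgebraic F K] :
    Algebra.trdeg K L = Algebra.trdeg F L := by
  have h := lift_trdeg_add_eq F K L
  rwa [trdeg_eq_zero, Cardinal.lift_zero, zero_add, Cardinal.lift_inj] at h

theorem natCard_le_trdeg_of_isAlgebraic [Finite ι] {y : ι → L} (hy : AlgebraicIndependent F y)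
    (hyK : ∀ i, IsAlgebraic K (y i)) : (Nat.card ι : Cardinal) ≤ Algebra.trdeg F K := by
  let A := algebraicClosure K L
  have hyA : AlgebraicIndependent F fun i ↦ (⟨y i, mem_algebraicClosure_iff.2 (hyK i)⟩ : A) :=
    .of_comp (A.val.restrictScalars F) hy
  have hle := hyA.lift_cardinalMk_le_trdeg
  rw [← Nat.cast_card, Cardinal.lift_natCast, Cardinal.nat_le_lift_iff] at hle
  rwa [← Cardinal.nat_le_lift_iff.{v, w}, lift_trdeg_eq_lift_trdeg_of_isAlgebraic (L := A),
    Cardinal.nat_le_lift_iff]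

theorem trdegEq_top_of_adjoin_eq_top [Finite ι] [Algebra F k] [Algebra k L] [IsScalarTower F k L]
    [Algebra.IsAlgebraic F k] [Algebra.IsAlgebraic K L] {x : ι → L}
    (hx : AlgebraicIndependent k x) (hxtop : IntermediateField.adjoin k (Set.range x) = ⊤) :
    TrdegEq (⊤ : IntermediateField F K) (Nat.card ι) := by
  have hbasis : IsTranscendenceBasis k x := by
    rw [hx.isTranscendenceBasis_iff_isAlgebraic, ← IntermediateField.isAlgebraic_adjoin_iff_top,
      hxtop]
    infer_instance
  have hL := hbasis.lift_cardinalMk_eq_trdeg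
  rw [trdeg_eq_trdeg_of_isAlgebraic (F := F), ← Nat.cast_card, Cardinal.lift_natCast,
    Cardinal.nat_eq_lift_iff] at hL
  rw [trdegEq_iff, IntermediateField.topEquiv.trdeg_eq, ← Cardinal.lift_eq_nat_iff.{v, w},
    lift_trdeg_eq_lift_trdeg_of_isAlgebraic (L := L), ← hL, Cardinal.lift_natCast]

end TranscendenceDegree

section CyclotomicConjugation

theorem exists_isCyclotomicExtension_rat (n : ℕ) [NeZero n] :
    ∃ (k : Type) (_ : Field k) (_ : Algebra ℚ k), IsCyclotomicExtension {n} ℚ k :=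
  ⟨CyclotomicField n ℚ, _, CyclotomicField.algebra n ℚ,
    CyclotomicField.isCyclotomicExtension n ℚ⟩

variable {n : ℕ} [NeZero n] {F k : Type*} [Field F] [Field k] [Algebra F k]
  [IsCyclotomicExtension {n} F k] {ζ : k}

theorem injective_galois_smul_of_isPrimitiveRoot (hζ : IsPrimitiveRoot ζ n) :
    Function.Injective fun γ : Gal(k/F) ↦ γ • ζ := fun γ δ h ↦
  AlgEquiv.coe_toAlgHom_injective <| (hζ.powerBasis F).algHom_ext <| by
    rwa [hζ.powerBasis_gen F]

theorem natCard_gal_rat_two_pow {l : ℕ} [Algebra ℚ k] [IsCyclotomicExtension {2 ^ (l + 1)} ℚ k] :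
    Nat.card Gal(k/ℚ) = 2 ^ l := by
  have := IsCyclotomicExtension.isGalois {2 ^ (l + 1)} ℚ k
  have := IsCyclotomicExtension.finiteDimensional {2 ^ (l + 1)} ℚ k
  rw [IsGalois.card_aut_eq_finrank, IsCyclotomicExtension.finrank k
    (Polynomial.cyclotomic.irreducible_rat (NeZero.pos (2 ^ (l + 1)))),
    Nat.totient_prime_pow_succ Nat.prime_two, Nat.add_one_sub_one, mul_one]

theorem exists_ringHom_complex_map_eq_star [Algebra ℚ k] [IsCyclotomicExtension {n} ℚ k]
    (hζ : IsPrimitiveRoot ζ n) {τ : Gal(k/ℚ)} (hτ : τ • ζ = ζ⁻¹) :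
    ∃ σ : k →+* ℂ, ∀ c, σ (τ • c) = star (σ c) := by
  have := IsCyclotomicExtension.finiteDimensional {n} ℚ k
  let σ : k →ₐ[ℚ] ℂ := IsAlgClosed.lift
  have hστ : σ.comp (τ : k →ₐ[ℚ] k) = (starRingEnd ℂ).toRatAlgHom.comp σ := by
    refine (hζ.powerBasis ℚ).algHom_ext ?_
    rw [hζ.powerBasis_gen ℚ]
    change σ (τ • ζ) = starRingEnd ℂ (σ ζ)
    rw [hτ, map_inv₀]
    exact Complex.inv_eq_conj ((hζ.map_of_injective σ.injective).norm'_eq_one (NeZero.ne n))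
  exact ⟨σ, DFunLike.congr_fun hστ⟩

end CyclotomicConjugation

section SubgroupOfIndexTwo

variable {Γ : Type*} [Group Γ] {τ : Γ}

theorem two_mul_natCard_of_mem_iff_mul_notMem {H : Subgroup Γ} (hH : ∀ γ, γ ∈ H ↔ γ * τ ∉ H) :
    2 * Nat.card H = Nat.card Γ := by
  have hindex : H.index = 2 :=
    Subgroup.index_eq_two_iff_exists_notMem_and.2 ⟨τ, by
      simpa only [one_mul] using (hH 1).1 H.one_mem, fun γ ↦ by
        rw [hH γ]; exact em _⟩
  rw [← H.card_mul_index, hindex, mul_comm]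

theorem mem_stabilizer_iff_mul_notMem {k : Type*} [Field k] [CharZero k]
    [MulSemiringAction Γ k] {I : k} (hI : I * I = -1) (hτI : τ • I = I⁻¹) (γ : Γ) :
    γ ∈ MulAction.stabilizer Γ I ↔ γ * τ ∉ MulAction.stabilizer Γ I := by
  rw [inv_eq_of_mul_eq_one_right (b := -I) (by rw [mul_neg, hI, neg_neg])] at hτI
  have hI0 : I ≠ 0 := by
    rintro rfl
    simp at hI
  have hγ : γ • I = I ∨ γ • I = -I := by
    rw [← mul_self_eq_mul_self_iff, ← smul_mul', hI, smul_neg, smul_one]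
  have hne : -I ≠ I := fun h ↦ hI0 (neg_eq_self.1 h)
  rw [MulAction.mem_stabilizer_iff, MulAction.mem_stabilizer_iff, mul_smul, hτI, smul_neg]
  obtain h | h := hγ <;> simp [h, hne]

end SubgroupOfIndexTwo

section LowerBound

variable {F k K L Γ : Type*} [Field F] [Field k] [Field K] [Field L] [Algebra F k] [Algebra k L]
  [Algebra F K] [Algebra K L] [Algebra F L] [IsScalarTower F k L] [IsScalarTower F K L]
  [Group Γ] [MulSemiringAction Γ k] [MulSemiringAction Γ L] [SMulCommClass Γ K L]

theorem not_trdegLT_of_mul_smul_eq_neg_one {H : Subgroup Γ} [Finite H] (h2 : IsPGroup 2 H)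
    {τ : Γ} (hττ : τ * τ = 1) (hτ : ∀ γ, γ * τ = τ * γ)
    {σ : k →+* ℂ} (hσ : ∀ c, σ (τ • c) = star (σ c))
    (hΓ : ∀ (γ : Γ) (c : k), γ • algebraMap k L c = algebraMap k L (γ • c)) {x : H → L}
    (hx : AlgebraicIndependent k x) (hxtop : IntermediateField.adjoin k (Set.range x) = ⊤)
    (hHx : ∀ g h : H, g • x h = x (g * h)) (hτx : ∀ h, x h * τ • x h = -1)
    {K₀ : IntermediateField F K} {y z : L} (hz : IsIntegral K₀ z) (hyz : y ∈ Algebra.adjoin K₀ {z})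
    (hy : y * τ • y = -1) : ¬ TrdegLT K₀ (Nat.card H) := by
  have hyk : AlgebraicIndependent k fun h : H ↦ h • y := by
    refine algebraicIndependent_of_mul_map_eq_neg_one h2 (fun h ↦ hΓ h)
      (τ₀ := MulSemiringAction.toRingHom Γ k τ) (τ := MulSemiringAction.toRingHom Γ L τ) hσ (hΓ τ)
      (fun w ↦ ?_) hHx (fun g h ↦ (mul_smul g h y).symm) hτx (fun h ↦ ?_) hx hxtop
    · change τ • τ • w = w
      rw [← mul_smul, hττ, one_smul]
    · change (h : Γ) • y * τ • (h : Γ) • y = -1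
      rw [← mul_smul, ← hτ, mul_smul, ← smul_mul', hy, smul_neg, smul_one]
  have hyK₀ : IsAlgebraic K₀ y := (adjoin_le_integralClosure hz hyz).isAlgebraic
  rw [trdegLT_iff, not_lt]
  exact natCard_le_trdeg_of_isAlgebraic (hyk.restrictScalars (algebraMap F k).injective)
    fun h ↦ hyK₀.algHom ((MulSemiringAction.toAlgHom K L (h : Γ)).restrictScalars K₀)

end LowerBound

section Construction

open IntermediateField

variable {k L Γ : Type} [Field k] [Algebra ℚ k] [Field L] [Algebra k L] [Group Γ] [Finite Γ]
  [MulSemiringAction Γ k] [MulSemiringAction Γ L] [IsGaloisGroup Γ ℚ k]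

theorem nonempty_schillingWitness (K : Type) [Field K] [Algebra ℚ K] [Algebra K L]
    [IsGaloisGroup Γ K L] {l : ℕ} {H : Subgroup Γ} (hH : Nat.card H = 2 ^ l) {ζ : k}
    (hζ : ζ ^ 2 ^ (l + 1) = -1) (hinj : Function.Injective fun γ : Γ ↦ γ • ζ) {τ : Γ}
    (hττ : τ * τ = 1) (hτ : ∀ γ, γ * τ = τ * γ) (hτζ : τ • ζ = ζ⁻¹) {σ : k →+* ℂ}
    (hσ : ∀ c, σ (τ • c) = star (σ c))
    (hΓ : ∀ (γ : Γ) (c : k), γ • algebraMap k L c = algebraMap k L (γ • c)) {x : H → L}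
    (hx : AlgebraicIndependent k x) (hxtop : adjoin k (Set.range x) = ⊤)
    (hHx : ∀ g h : H, g • x h = x (g * h)) (hτx : ∀ h, x h * τ • x h = -1) :
    Nonempty (SchillingWitness l) := by
  have := IsGaloisGroup.finiteDimensional Γ ℚ k
  have := IsGaloisGroup.finiteDimensional Γ K L
  have : SMulCommClass Γ K L := IsGaloisGroup.commutes
  have := charZero_of_injective_algebraMap (algebraMap ℚ K).injective
  have := charZero_of_injective_algebraMap (algebraMap K L).injective
  let z := algebraMap k L ζ
  let t : L →ₐ[K] L := MulSemiringAction.toAlgHom K L τ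
  have hz : z ^ 2 ^ (l + 1) = -1 := by rw [← map_pow, hζ, map_neg, map_one]
  have htt (v) : t (t v) = v := by
    change τ • τ • v = v
    rw [← mul_smul, hττ, one_smul]
  have htz : t z = z⁻¹ := by rw [← map_inv₀, ← hτζ]; exact hΓ τ ζ
  have hztop : Algebra.adjoin K {z} = ⊤ :=
    adjoin_singleton_eq_top_of_injective Γ K fun γ δ h ↦
      hinj ((algebraMap k L).injective (by simpa only [z, hΓ] using h))
  have heven : Even (2 ^ (l + 1)) := ⟨2 ^ l, by rw [pow_succ, mul_two]⟩
  let b := Module.finBasis K L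
  refine ⟨⟨QuaternionGroup (2 ^ (l + 1)), K, isPGroup_two_quaternionGroup _, _,
    matrixRep (quaternionRep hz htt htz (hτx 1)) b,
    isIrreducibleRep_matrixRep_quaternionRep hz htt htz (hτx 1) b hztop, fun g ↦ ?_,
    ⟨⊤, descends_top _, ?_⟩, fun K₀ hlt hd ↦ ?_⟩⟩
  · rw [repChar_matrixRep]
    refine trace_quaternionRep_mem_range hz htt htz (hτx 1) heven (fun i ↦ ?_) g
    rw [← map_pow, trace_algebraMap_of_smul_algebraMap Γ K (F := ℚ) hΓ]
    exact ⟨_, rfl⟩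
  · exact hH ▸ trdegEq_top_of_adjoin_eq_top hx hxtop
  · obtain ⟨y, hyz, hy⟩ := exists_mul_map_eq_neg_one_of_descends hz htt htz (hτx 1) hztop hd
    have hzint : IsIntegral K₀ z := .of_pow (by positivity) (hz ▸ isIntegral_one.neg)
    exact not_trdegLT_of_mul_smul_eq_neg_one (.of_card hH) hττ hτ hσ hΓ hx hxtop hHx hτx hzint hyz
      hy (hH ▸ hlt)

theorem nonempty_schillingWitness_of_index_two {l : ℕ} {H : Subgroup Γ} (hH : Nat.card H = 2 ^ l)
    {ζ : k} (hζ : ζ ^ 2 ^ (l + 1) = -1) (hinj : Function.Injective fun γ : Γ ↦ γ • ζ) {τ : Γ}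
    (hτ : ∀ γ, γ * τ = τ * γ) (hτζ : τ • ζ = ζ⁻¹) {σ : k →+* ℂ}
    (hσ : ∀ c, σ (τ • c) = star (σ c)) (hHτ : ∀ γ, γ ∈ H ↔ γ * τ ∉ H) :
    Nonempty (SchillingWitness l) := by
  have hττ : τ * τ = 1 := hinj <| by simp only [mul_smul, hτζ, smul_inv'', inv_inv, one_smul]
  obtain ⟨L, _, _, x, hx, hxtop⟩ := exists_algebraicIndependent_adjoin_eq_top H k
  obtain ⟨φ, hφ, hφH, hφτ⟩ := exists_semilinear_action_neg_inv hττ hτ hHτ hx hxtop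
  let := MulSemiringAction.compHom L φ
  have : FaithfulSMul Γ L := ⟨fun {γ δ} h ↦ hinj <| (algebraMap k L).injective <|
    (hφ γ ζ).symm.trans <| (h _).trans (hφ δ ζ)⟩
  have := charZero_of_injective_algebraMap (algebraMap ℚ k).injective
  have := charZero_of_injective_algebraMap (algebraMap k L).injective
  have hφx (h) : x h * τ • x h = -1 :=
    (congrArg (x h * ·) (hφτ h)).trans (by rw [mul_neg, mul_inv_cancel₀ (hx.ne_zero h)])
  exact nonempty_schillingWitness (FixedPoints.subfield Γ L) hH hζ hinj hττ hτ hτζ hσ hφ hx hxtop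
    hφH hφx

end Construction

/-- A variant of a theorem of Schilling: for every `l ≥ 0` there exist a finite `2`-group
`G`, a field extension `K/ℚ`, and a `K`-irreducible representation `ρ : G → GL_n(K)`
with rational character whose essential dimension over `ℚ` equals `2^l`. -/
theorem exists_two_group_rep_with_ed_two_pow (l : ℕ) :
    Nonempty (SchillingWitness l) := by
  obtain ⟨k, _, _, _⟩ := exists_isCyclotomicExtension_rat (2 ^ (l + 2))
  have := IsCyclotomicExtension.isGalois {2 ^ (l + 2)} ℚ k
  have := IsCyclotomicExtension.finiteDimensional {2 ^ (l + 2)} ℚ k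
  have := IsCyclotomicExtension.isMulCommutative {2 ^ (l + 2)} ℚ k
  have := charZero_of_injective_algebraMap (algebraMap ℚ k).injective
  have hζ := IsCyclotomicExtension.zeta_spec (2 ^ (l + 2)) ℚ k
  set ζ := IsCyclotomicExtension.zeta (2 ^ (l + 2)) ℚ k
  have hinj := injective_galois_smul_of_isPrimitiveRoot (F := ℚ) hζ
  have hirr := Polynomial.cyclotomic.irreducible_rat (NeZero.pos (2 ^ (l + 2)))
  let τ : Gal(k/ℚ) := IsCyclotomicExtension.fromZetaAut hζ.inv hirr
  have hτζ : τ • ζ = ζ⁻¹ := IsCyclotomicExtension.fromZetaAut_spec hζ.inv hirr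
  obtain ⟨σ, hσ⟩ := exists_ringHom_complex_map_eq_star hζ hτζ
  have hneg : ζ ^ 2 ^ (l + 1) = -1 :=
    (hζ.pow (by positivity) (pow_succ 2 (l + 1))).eq_neg_one_of_two_right
  have hI : ζ ^ 2 ^ l * ζ ^ 2 ^ l = -1 := by rw [← pow_add, ← two_mul, ← pow_succ', hneg]
  have hH := mem_stabilizer_iff_mul_notMem hI (by rw [smul_pow', hτζ, inv_pow] : τ • _ = _)
  have hcard := two_mul_natCard_of_mem_iff_mul_notMem hH
  rw [natCard_gal_rat_two_pow (l := l + 1), pow_succ', Nat.mul_right_inj two_ne_zero] at hcard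
  exact nonempty_schillingWitness_of_index_two hcard hneg hinj (mul_comm' · τ) hτζ hσ hH
end
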